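/- Conditional spectral gap with local particle-number averaging: Let d ≥ 2, ρ ∈ (0,1) and p ≥ 1 be a real number. There exists a constant C(d,ρ,p) < ∞ such that the following holds for all integers ℓ, L ≥ 1 such that (2ℓ+1) divides (2L+1), with B_L partitioned into m = (2L+1)^d/(2ℓ+1)^d disjoint translates B_{ℓ,1},…,B_{ℓ,m} of B_ℓ. For every bounded nonnegative function h on {(x,η) ∈ B_L × {0,1}^{B_L} : η(x) = 1}, one has Σ_{x ∈ B_L} ⟨ |h − π^ℓ_L h(𝐌, x)|^{2p} · 1^ρ(𝐌) | x ⟩ ≤ C ℓ² Σ_{x ∈ B_L} Σ_{e ∈ 𝔹_L} ⟨ a_e ((h^e)^p − h^p)² | x ⟩. -/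

import Mathlib

open Finset
open scoped Classical

noncomputable section

/-- The box `B_ℓ = {−ℓ,…,ℓ}^d` in `ℤ^d`. -/
def Box (d ℓ : ℕ) : Finset (Fin d → ℤ) :=
  Finset.Icc (fun _ => -(ℓ : ℤ)) (fun _ => (ℓ : ℤ))

/-- A site of the box `B_L`. -/
abbrev Site (d L : ℕ) := {x : Fin d → ℤ // x ∈ Box d L}

/-- A particle configuration `η ∈ {0,1}^{B_L}`. -/
abbrev Config (d L : ℕ) := Site d L → Bool

/-- Two sites are neighbours when their Euclidean distance is `1`. -/
abbrev SiteAdj {d L : ℕ} (y z : Site d L) : Prop :=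
  (∑ i, ((y : Fin d → ℤ) i - (z : Fin d → ℤ) i) ^ 2) = 1

/-- The weight of the configuration `η` under the measure `⟨· | x⟩` on `{0,1}^{B_L}`,
under which `η(x) = 1` almost surely and `(η(y))_{y ≠ x}` are i.i.d. Bernoulli(ρ). -/
def tagWeight (d L : ℕ) (ρ : ℝ) (x : Site d L) (η : Config d L) : ℝ :=
  (if η x = true then 1 else 0) *
    ∏ y ∈ Finset.univ.erase x, (if η y then ρ else 1 - ρ)

/-- Expectation `⟨g | x⟩` with respect to the measure `⟨· | x⟩`. -/
def tagExp (d L : ℕ) (ρ : ℝ) (x : Site d L) (g : Config d L → ℝ) : ℝ :=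
  ∑ η : Config d L, tagWeight d L ρ x η * g η

/-- The translate `v + B_ℓ` of the box `B_ℓ`, viewed inside `B_L`. -/
def block (d L ℓ : ℕ) (v : Fin d → ℤ) : Finset (Site d L) :=
  Finset.univ.filter fun y => (y : Fin d → ℤ) - v ∈ Box d ℓ

/-- The number `M_i` of particles of `η` in the translate `v + B_ℓ` of `B_ℓ`. -/
def blockCount (d L ℓ : ℕ) (v : Fin d → ℤ) (η : Config d L) : ℕ :=
  ((block d L ℓ v).filter fun y => η y = true).card

/-- The event (appearing in the indicator `1^ρ(𝐌)`) that every block count `M_i`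
satisfies `(ρ/2)|B_ℓ| ≤ M_i ≤ ((ρ+1)/2)|B_ℓ|`. -/
def goodCounts (d L ℓ m : ℕ) (ρ : ℝ) (v : Fin m → Fin d → ℤ) (η : Config d L) : Prop :=
  ∀ i, ρ / 2 * ((Box d ℓ).card : ℝ) ≤ (blockCount d L ℓ (v i) η : ℝ) ∧
    (blockCount d L ℓ (v i) η : ℝ) ≤ (ρ + 1) / 2 * ((Box d ℓ).card : ℝ)

/-- The conditional expectation `⟨g | 𝐌 = M, y⟩` of `g` under `⟨· | y⟩` given that all
the block counts take the prescribed values `M = (M₁,…,M_m)`. -/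
def condExpCounts (d L ℓ m : ℕ) (ρ : ℝ) (v : Fin m → Fin d → ℤ) (y : Site d L)
    (M : Fin m → ℕ) (g : Config d L → ℝ) : ℝ :=
  tagExp d L ρ y (fun η => if ∀ i, blockCount d L ℓ (v i) η = M i then g η else 0) /
    tagExp d L ρ y (fun η => if ∀ i, blockCount d L ℓ (v i) η = M i then 1 else 0)

/-- The local average `π^ℓ_L h (M, x)` for `x` in the `i`-th block:
`|B_ℓ|⁻¹ Σ_{y ∈ B_{ℓ,i}} ⟨h | 𝐌 = M, y⟩`. -/
def piAvg (d L ℓ m : ℕ) (ρ : ℝ) (v : Fin m → Fin d → ℤ) (i : Fin m)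
    (M : Fin m → ℕ) (h : Site d L → Config d L → ℝ) : ℝ :=
  (((Box d ℓ).card : ℝ))⁻¹ *
    ∑ y ∈ block d L ℓ (v i), condExpCounts d L ℓ m ρ v y M (h y)

/-!
Conditionally on the block counts, the Bernoulli weight is constant, so each sector (a choice of
block counts) carries the uniform measure and the variance of `h ^ p` there splits into the variance
over configurations with the tag fixed, and the variance of the sector means over tag positions.

With the tag fixed, the exchangeable configurations carry an isometric action of a product of
symmetric groups, whose transposition walk has an explicit gap; a transposition of two sites is then
realised by nearest-neighbour swaps along grid paths avoiding the tag, which exist because `d ≥ 2`.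
To compare sector means at neighbouring tag positions `x` and `x'`, one brings the hole nearest to
`x'` onto `x'` and then lets the tag jump into it. The block density is at most `(ρ + 1) / 2 < 1`,
so the weight of the configurations whose nearest hole is at distance `r` decays exponentially
in `r`, and the total cost stays of order `ℓ ^ 2`.

Finally `|a - b| ^ (2 * p) ≤ (a ^ p - b ^ p) ^ 2` for `a, b ≥ 0`, together with Jensen's inequality,
reduces the `2p`-th moment of `h` to the variance of `h ^ p`.
-/

section SwapCost

/-- A cost on pairs of sites which behaves like the distance by which the transposition of two sites
moves a vector in an isometric representation of the symmetric group: since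
`(s t) = (s u) (u t) (s u)`, it obeys a triangle inequality with one doubled term. -/
structure IsSwapCost {S : Type*} (q : S → S → ℝ) : Prop where
  nonneg : ∀ s t, 0 ≤ q s t
  symm : ∀ s t, q s t = q t s
  self : ∀ s, q s s = 0
  triangle : ∀ s t u, q s t ≤ 2 * q s u + q u t

variable {S T : Type*} {q : S → S → ℝ}

theorem IsSwapCost.comp (hq : IsSwapCost q) (g : T → S) : IsSwapCost fun s t => q (g s) (g t) :=
  ⟨fun _ _ => hq.nonneg _ _, fun _ _ => hq.symm _ _, fun _ => hq.self _,
    fun _ _ _ => hq.triangle _ _ _⟩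

theorem IsSwapCost.le_two_mul_sum_range (hq : IsSwapCost q) (g : ℕ → S) (m : ℕ) :
    q (g 0) (g m) ≤ 2 * ∑ k ∈ range m, q (g k) (g (k + 1)) := by
  induction m with
  | zero => simp [hq.self]
  | succ m ih =>
    have last_step := hq.triangle (g (m + 1)) (g 0) (g m)
    rw [hq.symm (g (m + 1)) (g 0), hq.symm (g (m + 1)) (g m), hq.symm (g m) (g 0)] at last_step
    rw [sum_range_succ]
    linarith

theorem isSwapCost_abs_sub (f : S → ℝ) : IsSwapCost fun s t => |f s - f t| where
  nonneg _ _ := abs_nonneg _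
  symm _ _ := abs_sub_comm _ _
  self _ := by simp
  triangle s t u := by linarith [abs_sub_le (f s) (f u) (f t), abs_nonneg (f s - f u)]

end SwapCost

/-- The grid `{0,…,N}^d`, in which every block of the partition is charted. -/
abbrev Grid (d N : ℕ) := Fin d → Fin (N + 1)

namespace Grid

variable {d N : ℕ}

/-- Nearest neighbours in the grid: points at Euclidean distance `1`. -/
abbrev Adj (s t : Grid d N) : Prop := ∑ k, (((s k : ℕ) : ℤ) - ((t k : ℕ) : ℤ)) ^ 2 = 1

/-- Replaces the `k`-th coordinate of `u` by `c`, or by `N` if `c > N`. -/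
def setCoord (u : Grid d N) (k : Fin d) (c : ℕ) : Grid d N :=
  Function.update u k ⟨min c N, by omega⟩

/-- The neighbour of `u` in the positive direction `k`, or `u` itself at the boundary. -/
def next (u : Grid d N) (k : Fin d) : Grid d N := setCoord u k (u k + 1)

/-- `x` and `y` differ by one in the `k`-th coordinate and agree in the other ones. -/
def AdjAlong (k : Fin d) (x y : Grid d N) : Prop :=
  ((y k : ℕ) = x k + 1 ∨ (x k : ℕ) = y k + 1) ∧ ∀ j ≠ k, y j = x j

theorem AdjAlong.symm {k : Fin d} {x y : Grid d N} (h : AdjAlong k x y) : AdjAlong k y x :=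
  ⟨h.1.symm, fun j hj => (h.2 j hj).symm⟩

theorem AdjAlong.adj {k : Fin d} {x y : Grid d N} (h : AdjAlong k x y) : Adj x y := by
  rw [Adj, sum_eq_single_of_mem k (mem_univ k)]
  · rcases h.1 with hk | hk <;> rw [hk] <;> push_cast <;> ring
  · intro j _ hj
    rw [h.2 j hj, sub_self, zero_pow two_ne_zero]

theorem AdjAlong.ne {k : Fin d} {x y : Grid d N} (h : AdjAlong k x y) : y ≠ x := by
  rintro rfl
  have := h.1
  omega

theorem setCoord_setCoord (u : Grid d N) (k : Fin d) (c c' : ℕ) :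
    setCoord (setCoord u k c) k c' = setCoord u k c' := by
  simp [setCoord]

theorem setCoord_apply_same (u : Grid d N) (k : Fin d) (c : ℕ) :
    (setCoord u k c k : ℕ) = min c N := by
  simp [setCoord]

theorem setCoord_apply_of_ne (u : Grid d N) {k j : Fin d} (hj : j ≠ k) (c : ℕ) :
    setCoord u k c j = u j :=
  Function.update_of_ne hj _ _

theorem update_eq_setCoord (u : Grid d N) (k : Fin d) (c : Fin (N + 1)) :
    Function.update u k c = setCoord u k c := by
  have truncation : (⟨min (c : ℕ) N, by omega⟩ : Fin (N + 1)) = c := Fin.ext (by simp; omega)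
  rw [setCoord, truncation]

theorem setCoord_self (u : Grid d N) (k : Fin d) : setCoord u k (u k) = u := by
  rw [← update_eq_setCoord, Function.update_eq_self]

theorem next_setCoord (u : Grid d N) (k : Fin d) (c : ℕ) :
    next (setCoord u k c) k = setCoord u k (c + 1) := by
  rw [next, setCoord_setCoord, setCoord_apply_same, setCoord, setCoord]
  congr 2
  omega

theorem next_eq_self_or_adjAlong (u : Grid d N) (k : Fin d) :
    next u k = u ∨ AdjAlong k u (next u k) := by
  by_cases h : (u k : ℕ) = N
  · left
    conv_rhs => rw [← setCoord_self u k]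
    rw [next, setCoord, setCoord]
    congr 2
    omega
  · right
    refine ⟨.inl ?_, fun j hj => setCoord_apply_of_ne u hj _⟩
    rw [next, setCoord_apply_same]
    omega

/-- The point whose first `k` coordinates are those of `t` and whose other ones are those of `s`. -/
def mix (s t : Grid d N) (k : ℕ) : Grid d N := fun j => if (j : ℕ) < k then t j else s j

theorem mix_zero (s t : Grid d N) : mix s t 0 = s := by ext; simp [mix]

theorem mix_last (s t : Grid d N) : mix s t d = t := by ext; simp [mix]

theorem mix_mix (s t : Grid d N) (k : ℕ) : mix (mix s t k) (mix t s k) k = s := by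
  ext j; simp only [mix]; split_ifs <;> rfl

theorem setCoord_mix_left (s t : Grid d N) (k : Fin d) :
    setCoord (mix s t k) k (s k) = mix s t k := by
  conv_rhs => rw [← setCoord_self (mix s t k) k]
  simp [mix]

theorem setCoord_mix_right (s t : Grid d N) (k : Fin d) :
    setCoord (mix s t k) k (t k) = mix s t (k + 1) := by
  rw [← update_eq_setCoord]
  ext j
  by_cases hj : j = k
  · subst hj; simp [mix]
  · have : (j : ℕ) < k + 1 ↔ (j : ℕ) < k := by
      have : (j : ℕ) ≠ k := fun h => hj (Fin.ext h)
      omega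
    simp only [Function.update_of_ne hj, mix, this]

theorem sum_sum_update (k : Fin d) (F : Grid d N → ℝ) :
    ∑ u : Grid d N, ∑ c, F (Function.update u k c) = (N + 1) * ∑ u, F u := by
  have exchange : Function.Involutive fun x : Grid d N × Fin (N + 1) =>
      (Function.update x.1 k x.2, x.1 k) := fun x => by simp
  calc _ = ∑ x, F (exchange.toPerm _ x).1 := (Fintype.sum_prod_type' _).symm
    _ = ∑ x : Grid d N × Fin (N + 1), F x.1 := Equiv.sum_comp exchange.toPerm fun x => F x.1
    _ = _ := by simp [Fintype.sum_prod_type, mul_sum]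

theorem sum_sum_mix (k : ℕ) (F : Grid d N → ℝ) :
    ∑ s : Grid d N, ∑ t, F (mix s t k) = Fintype.card (Grid d N) * ∑ u, F u := by
  have exchange : Function.Involutive fun x : Grid d N × Grid d N =>
      (mix x.1 x.2 k, mix x.2 x.1 k) := fun x => by simp [mix_mix]
  calc _ = ∑ x, F (exchange.toPerm _ x).1 := (Fintype.sum_prod_type' _).symm
    _ = ∑ x : Grid d N × Grid d N, F x.1 := Equiv.sum_comp exchange.toPerm fun x => F x.1
    _ = _ := by simp [Fintype.sum_prod_type, mul_sum]

variable {q : Grid d N → Grid d N → ℝ}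

theorem cost_setCoord_le_sum_next (hq : IsSwapCost q) (u : Grid d N) (k : Fin d) {a b : ℕ}
    (hab : a ≤ b) : q (setCoord u k a) (setCoord u k b) ≤
      2 * ∑ c ∈ Ico a b, q (setCoord u k c) (next (setCoord u k c) k) := by
  have path_bound := hq.le_two_mul_sum_range (fun j => setCoord u k (a + j)) (b - a)
  simpa only [sum_Ico_eq_sum_range, next_setCoord, add_zero, Nat.add_sub_cancel' hab, add_assoc]
    using path_bound

theorem cost_le_sum_mix (hq : IsSwapCost q) (s t : Grid d N) :
    q s t ≤ 2 * ∑ k : Fin d,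
      q (setCoord (mix s t k) k (s k)) (setCoord (mix s t k) k (t k)) := by
  simp only [setCoord_mix_left, setCoord_mix_right]
  have path_bound := hq.le_two_mul_sum_range (mix s t) d
  rwa [mix_zero, mix_last, ← Fin.sum_univ_eq_sum_range fun k => q (mix s t k) (mix s t (k + 1))]
    at path_bound

theorem cost_setCoord_le_of_next_le (hq : IsSwapCost q) {Q : ℝ} (hQ0 : 0 ≤ Q)
    (hQ : ∀ s k, q s (next s k) ≤ Q) (u : Grid d N) (k : Fin d) {R a b : ℕ} (hab : a ≤ b + R)
    (hba : b ≤ a + R) : q (setCoord u k a) (setCoord u k b) ≤ 2 * (R * Q) := by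
  wlog hle : a ≤ b generalizing a b
  · rw [hq.symm]
    exact this hba hab (le_of_not_ge hle)
  refine (cost_setCoord_le_sum_next hq u k hle).trans ?_
  gcongr
  calc ∑ c ∈ Ico a b, q (setCoord u k c) (next (setCoord u k c) k)
      ≤ ∑ _c ∈ Ico a b, Q := sum_le_sum fun c _ => hQ _ _
    _ = (b - a : ℕ) * Q := by simp
    _ ≤ R * Q := by gcongr; omega

theorem cost_le_of_next_le (hq : IsSwapCost q) {Q : ℝ} (hQ0 : 0 ≤ Q)
    (hQ : ∀ s k, q s (next s k) ≤ Q) {s t : Grid d N} {R : ℕ}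
    (hR : ∀ k, (s k : ℕ) ≤ t k + R ∧ (t k : ℕ) ≤ s k + R) : q s t ≤ 4 * d * R * Q :=
  calc q s t
      ≤ 2 * ∑ k : Fin d, q (setCoord (mix s t k) k (s k)) (setCoord (mix s t k) k (t k)) :=
        cost_le_sum_mix hq s t
    _ ≤ 2 * ∑ _k : Fin d, 2 * (R * Q) := by
        gcongr with k
        exact cost_setCoord_le_of_next_le hq hQ0 hQ _ _ (hR k).1 (hR k).2
    _ = 4 * d * R * Q := by simp; ring

theorem sq_cost_setCoord_le_sum_next (hq : IsSwapCost q) (u : Grid d N) (k : Fin d)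
    (a b : Fin (N + 1)) : q (setCoord u k a) (setCoord u k b) ^ 2 ≤
      4 * (N + 1) * ∑ c, q (Function.update u k c) (next (Function.update u k c) k) ^ 2 := by
  wlog hab : a ≤ b generalizing a b
  · rw [hq.symm]
    exact this b a (le_of_not_ge hab)
  have line : ∑ c ∈ Ico (a : ℕ) b, q (setCoord u k c) (next (setCoord u k c) k) ≤
      ∑ c, q (Function.update u k c) (next (Function.update u k c) k) := by
    simp only [update_eq_setCoord]
    rw [Fin.sum_univ_eq_sum_range fun c => q (setCoord u k c) (next (setCoord u k c) k)]
    refine sum_le_sum_of_subset_of_nonneg (fun c hc => ?_) fun _ _ _ => hq.nonneg _ _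
    simp only [mem_Ico, mem_range] at hc ⊢
    omega
  calc q (setCoord u k a) (setCoord u k b) ^ 2
      ≤ (2 * ∑ c, q (Function.update u k c) (next (Function.update u k c) k)) ^ 2 :=
        pow_le_pow_left₀ (hq.nonneg _ _)
          ((cost_setCoord_le_sum_next hq u k hab).trans (by gcongr)) 2
    _ = 4 * (∑ c, q (Function.update u k c) (next (Function.update u k c) k)) ^ 2 := by ring
    _ ≤ 4 * ((N + 1) * ∑ c, q (Function.update u k c) (next (Function.update u k c) k) ^ 2) := by
        gcongr
        simpa using sq_sum_le_card_mul_sum_sq (s := univ)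
          (f := fun c => q (Function.update u k c) (next (Function.update u k c) k))
    _ = _ := by ring

theorem sum_sq_cost_setCoord_mix_le (hq : IsSwapCost q) (k : Fin d) :
    ∑ s, ∑ t, q (setCoord (mix s t k) k (s k)) (setCoord (mix s t k) k (t k)) ^ 2 ≤
      4 * (N + 1) ^ 2 * Fintype.card (Grid d N) * ∑ s, q s (next s k) ^ 2 :=
  calc ∑ s, ∑ t, q (setCoord (mix s t k) k (s k)) (setCoord (mix s t k) k (t k)) ^ 2
      ≤ ∑ s, ∑ t, 4 * (N + 1) * ∑ c, q (Function.update (mix s t k) k c)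
          (next (Function.update (mix s t k) k c) k) ^ 2 :=
        sum_le_sum fun _ _ => sum_le_sum fun _ _ => sq_cost_setCoord_le_sum_next hq _ _ _ _
    _ = 4 * (N + 1) * (Fintype.card (Grid d N) * ((N + 1) * ∑ s, q s (next s k) ^ 2)) := by
        simp only [← mul_sum]
        rw [sum_sum_mix k fun u => ∑ c, q (Function.update u k c)
          (next (Function.update u k c) k) ^ 2, sum_sum_update k fun u => q u (next u k) ^ 2]
    _ = _ := by ring

theorem sum_sq_cost_le_sum_next (hq : IsSwapCost q) :
    ∑ s, ∑ t, q s t ^ 2 ≤ 16 * d * (N + 1) ^ 2 * Fintype.card (Grid d N) *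
      ∑ k : Fin d, ∑ s, q s (next s k) ^ 2 := by
  have sq_cost_le (s t : Grid d N) : q s t ^ 2 ≤ 4 * d * ∑ k : Fin d,
      q (setCoord (mix s t k) k (s k)) (setCoord (mix s t k) k (t k)) ^ 2 :=
    calc q s t ^ 2
        ≤ (2 * ∑ k : Fin d, q (setCoord (mix s t k) k (s k)) (setCoord (mix s t k) k (t k))) ^ 2 :=
          pow_le_pow_left₀ (hq.nonneg s t) (cost_le_sum_mix hq s t) 2
      _ ≤ 4 * (d * ∑ k : Fin d,
            q (setCoord (mix s t k) k (s k)) (setCoord (mix s t k) k (t k)) ^ 2) := by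
          rw [mul_pow]
          norm_num only
          gcongr
          simpa using sq_sum_le_card_mul_sum_sq (s := univ) (f := fun k : Fin d =>
            q (setCoord (mix s t k) k (s k)) (setCoord (mix s t k) k (t k)))
      _ = _ := by ring
  calc ∑ s, ∑ t, q s t ^ 2
      ≤ ∑ s, ∑ t, 4 * d * ∑ k : Fin d,
          q (setCoord (mix s t k) k (s k)) (setCoord (mix s t k) k (t k)) ^ 2 :=
        sum_le_sum fun s _ => sum_le_sum fun t _ => sq_cost_le s t
    _ = 4 * d * ∑ k : Fin d, ∑ s, ∑ t,
          q (setCoord (mix s t k) k (s k)) (setCoord (mix s t k) k (t k)) ^ 2 := by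
        simp only [← mul_sum]
        rw [sum_comm (s := univ (α := Fin d))]
        simp only [sum_comm (s := univ (α := Fin d))]
    _ ≤ 4 * d * ∑ k : Fin d, 4 * (N + 1) ^ 2 * Fintype.card (Grid d N) *
          ∑ s, q s (next s k) ^ 2 := by
        gcongr with k
        exact sum_sq_cost_setCoord_mix_le hq k
    _ = _ := by rw [← mul_sum]; ring

theorem exists_adjAlong (hN : 1 ≤ N) (x : Grid d N) (k : Fin d) : ∃ y, AdjAlong k x y := by
  obtain ⟨c, hc⟩ : ∃ c : Fin (N + 1), (c : ℕ) = x k + 1 ∨ (x k : ℕ) = c + 1 := by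
    by_cases h : (x k : ℕ) = 0
    · exact ⟨⟨1, by omega⟩, .inl (by simp [h])⟩
    · exact ⟨⟨x k - 1, by omega⟩, .inr (by simp; omega)⟩
  exact ⟨Function.update x k c, by simpa using hc, fun j hj => Function.update_of_ne hj _ _⟩

theorem eq_of_adjAlong_next {s x : Grid d N} {k : Fin d} (hs : AdjAlong k s (next s k))
    (hx : next s k = x) : s = setCoord x k (x k - 1) := by
  have hk : (s k : ℕ) + 1 ≤ N := by
    have := hs.1
    rw [next, setCoord_apply_same] at this
    omega
  rw [← hx, next, setCoord_setCoord, setCoord_apply_same, min_eq_left hk, Nat.add_sub_cancel,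
    setCoord_self]

variable {x : Grid d N}

section Detour

variable {Q : ℝ}

/-- The two neighbours of `x` are opposite corners of a square through `x`, whose fourth corner
avoids `x`. -/
theorem cost_le_of_adjAlong_of_ne (hq : IsSwapCost q)
    (hQ : ∀ s t, s ≠ x → t ≠ x → Adj s t → q s t ≤ Q) {k l : Fin d} (hkl : k ≠ l)
    {y z : Grid d N} (hy : AdjAlong k x y) (hz : AdjAlong l x z) : q y z ≤ 3 * Q := by
  set corner := Function.update y l (z l)
  have corner_l : corner l = z l := Function.update_self _ _ _
  have corner_of_ne {j : Fin d} (hj : j ≠ l) : corner j = y j := Function.update_of_ne hj _ _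
  have corner_ne : corner ≠ x := fun h => by
    have := hz.1
    rw [← corner_l, h] at this
    omega
  have hyc : AdjAlong l y corner := by
    refine ⟨?_, fun j hj => corner_of_ne hj⟩
    rw [corner_l, hy.2 l hkl.symm]
    exact hz.1
  have hcz : AdjAlong k z corner := by
    refine ⟨?_, fun j hj => ?_⟩
    · rw [corner_of_ne hkl, hz.2 k hkl]
      exact hy.1
    · by_cases hjl : j = l
      · rw [hjl, corner_l]
      · rw [corner_of_ne hjl, hy.2 j hj, hz.2 j hjl]
  linarith [hq.triangle y z corner, hQ y corner hy.ne corner_ne hyc.adj,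
    hQ corner z corner_ne hz.ne hcz.symm.adj]

theorem cost_le_of_adjAlong (hq : IsSwapCost q) (hd : 2 ≤ d) (hN : 1 ≤ N) (hQ0 : 0 ≤ Q)
    (hQ : ∀ s t, s ≠ x → t ≠ x → Adj s t → q s t ≤ Q) {k l : Fin d}
    {y z : Grid d N} (hy : AdjAlong k x y) (hz : AdjAlong l x z) : q y z ≤ 9 * Q := by
  by_cases hkl : k = l
  · subst hkl
    have : Nontrivial (Fin d) := Fin.nontrivial_iff_two_le.2 hd
    obtain ⟨j, hj⟩ := exists_ne k
    obtain ⟨w, hw⟩ := exists_adjAlong hN x j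
    linarith [hq.triangle y z w, cost_le_of_adjAlong_of_ne hq hQ hj.symm hy hw,
      cost_le_of_adjAlong_of_ne hq hQ hj hw hz]
  · linarith [cost_le_of_adjAlong_of_ne hq hQ hkl hy hz]

/-- The retraction of the grid onto the complement of `x` which moves `x` to `y`. -/
def retract (x y s : Grid d N) : Grid d N := if s = x then y else s

@[simp]
theorem retract_self (x y : Grid d N) : retract x y x = y := if_pos rfl

theorem retract_of_ne {x s : Grid d N} (y : Grid d N) (hs : s ≠ x) : retract x y s = s := if_neg hs

theorem cost_retract_next_le (hq : IsSwapCost q) (hd : 2 ≤ d) (hN : 1 ≤ N) (hQ0 : 0 ≤ Q)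
    (hQ : ∀ s t, s ≠ x → t ≠ x → Adj s t → q s t ≤ Q) {k : Fin d} {y : Grid d N}
    (hy : AdjAlong k x y) (s : Grid d N) (l : Fin d) :
    q (retract x y s) (retract x y (next s l)) ≤ 9 * Q := by
  rcases next_eq_self_or_adjAlong s l with hself | hadj
  · rw [hself, hq.self]
    positivity
  by_cases hs : s = x
  · subst hs
    rw [retract_self, retract_of_ne y hadj.ne]
    exact cost_le_of_adjAlong hq hd hN hQ0 hQ hy hadj
  rw [retract_of_ne y hs]
  by_cases hnext : next s l = x
  · rw [hnext] at hadj
    rw [hnext, retract_self]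
    exact cost_le_of_adjAlong hq hd hN hQ0 hQ hadj.symm hy
  · rw [retract_of_ne y hnext]
    linarith [hQ s (next s l) hs hnext hadj.adj]

theorem cost_le_of_adj_le (hq : IsSwapCost q) (hd : 2 ≤ d) (hN : 1 ≤ N) (hQ0 : 0 ≤ Q)
    (hQ : ∀ s t, s ≠ x → t ≠ x → Adj s t → q s t ≤ Q) {s t : Grid d N} (hs : s ≠ x) (ht : t ≠ x)
    {R : ℕ} (hR : ∀ k, (s k : ℕ) ≤ t k + R ∧ (t k : ℕ) ≤ s k + R) :
    q s t ≤ 36 * d * R * Q := by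
  obtain ⟨y, hy⟩ := exists_adjAlong hN x ⟨0, by omega⟩
  have retracted := cost_le_of_next_le (hq.comp (retract x y)) (Q := 9 * Q) (by positivity)
    (fun s k => cost_retract_next_le hq hd hN hQ0 hQ hy s k) hR
  simp only [retract_of_ne y hs, retract_of_ne y ht] at retracted
  linarith

end Detour

/-- The Dirichlet form of `q` on the subgraph of the grid induced by the points satisfying `P`. -/
def edgeEnergy (q : Grid d N → Grid d N → ℝ) (P : Grid d N → Prop) : ℝ :=
  ∑ s with P s, ∑ t with P t ∧ Adj s t, q s t ^ 2

theorem edgeEnergy_nonneg (q : Grid d N → Grid d N → ℝ) (P : Grid d N → Prop) :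
    0 ≤ edgeEnergy q P :=
  sum_nonneg fun _ _ => sum_nonneg fun _ _ => sq_nonneg _

theorem sum_sq_cost_adj_le_edgeEnergy (q : Grid d N → Grid d N → ℝ) {P : Grid d N → Prop}
    {s : Grid d N} (hs : P s) : ∑ t with P t ∧ Adj s t, q s t ^ 2 ≤ edgeEnergy q P :=
  single_le_sum (f := fun s => ∑ t with P t ∧ Adj s t, q s t ^ 2)
    (fun _ _ => sum_nonneg fun _ _ => sq_nonneg _) (mem_filter.2 ⟨mem_univ s, hs⟩)

theorem sq_cost_le_sum_adj (q : Grid d N → Grid d N → ℝ) {P : Grid d N → Prop} {s t : Grid d N}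
    (ht : P t) (hst : Adj s t) : q s t ^ 2 ≤ ∑ t with P t ∧ Adj s t, q s t ^ 2 :=
  single_le_sum (f := fun t => q s t ^ 2) (fun _ _ => sq_nonneg _)
    (mem_filter.2 ⟨mem_univ t, ht, hst⟩)

theorem sum_sq_cost_next_le_edgeEnergy (hq : IsSwapCost q) (P : Grid d N → Prop) :
    ∑ k : Fin d, ∑ s with P s ∧ P (next s k), q s (next s k) ^ 2 ≤ d * edgeEnergy q P := by
  have direction_le (k : Fin d) :
      ∑ s with P s ∧ P (next s k), q s (next s k) ^ 2 ≤ edgeEnergy q P := by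
    refine (sum_le_sum fun s hs => ?_).trans <| sum_le_sum_of_subset_of_nonneg
      (fun s hs => mem_filter.2 ⟨mem_univ s, (mem_filter.1 hs).2.1⟩)
      fun _ _ _ => sum_nonneg fun _ _ => sq_nonneg _
    rcases next_eq_self_or_adjAlong s k with hself | hadj
    · rw [hself, hq.self, zero_pow two_ne_zero]
      exact sum_nonneg fun _ _ => sq_nonneg _
    · exact sq_cost_le_sum_adj q (mem_filter.1 hs).2.2 hadj.adj
  simpa using sum_le_card_nsmul univ _ _ fun k _ => direction_le k

theorem sq_cost_retract_next_le (hq : IsSwapCost q) (hd : 2 ≤ d) (hN : 1 ≤ N) {k : Fin d}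
    {y : Grid d N} (hy : AdjAlong k x y) (s : Grid d N) (l : Fin d) :
    q (retract x y s) (retract x y (next s l)) ^ 2 ≤ 81 * edgeEnergy q (· ≠ x) := by
  have cost_le_sqrt (s t : Grid d N) (hs : s ≠ x) (ht : t ≠ x) (hst : Adj s t) :
      q s t ≤ √(edgeEnergy q (· ≠ x)) :=
    Real.le_sqrt_of_sq_le <| (sq_cost_le_sum_adj q (P := (· ≠ x)) ht hst).trans
      (sum_sq_cost_adj_le_edgeEnergy q (P := (· ≠ x)) hs)
  calc q (retract x y s) (retract x y (next s l)) ^ 2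
      ≤ (9 * √(edgeEnergy q (· ≠ x))) ^ 2 := pow_le_pow_left₀ (hq.nonneg _ _)
        (cost_retract_next_le hq hd hN (Real.sqrt_nonneg _) cost_le_sqrt hy s l) 2
    _ = 81 * edgeEnergy q (· ≠ x) := by
        rw [mul_pow, Real.sq_sqrt (edgeEnergy_nonneg _ _)]
        norm_num

/-- Only the two steps in direction `l` which enter or leave `x` are affected by the retraction. -/
theorem sum_sq_cost_retract_next_le (hq : IsSwapCost q) (hd : 2 ≤ d) (hN : 1 ≤ N) {k : Fin d}
    {y : Grid d N} (hy : AdjAlong k x y) (l : Fin d) :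
    ∑ s, q (retract x y s) (retract x y (next s l)) ^ 2 ≤
      ∑ s with s ≠ x ∧ next s l ≠ x, q s (next s l) ^ 2 + 162 * edgeEnergy q (· ≠ x) := by
  have unaffected (s : Grid d N) (hs : s ∈ ({s | s ≠ x ∧ next s l ≠ x} : Finset _)) :
      q (retract x y s) (retract x y (next s l)) ^ 2 = q s (next s l) ^ 2 := by
    rw [retract_of_ne y (mem_filter.1 hs).2.1, retract_of_ne y (mem_filter.1 hs).2.2]
  have affected_subset : ({s | ¬(s ≠ x ∧ next s l ≠ x)} : Finset (Grid d N)) ⊆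
      {x, setCoord x l (x l - 1)} := by
    intro s hs
    rw [mem_insert, mem_singleton, or_iff_not_imp_left]
    intro hsx
    have hnext : next s l = x := by simpa [hsx] using hs
    have hadj := (next_eq_self_or_adjAlong s l).resolve_left fun h => hsx (h ▸ hnext)
    exact eq_of_adjAlong_next hadj hnext
  rw [← sum_filter_add_sum_filter_not univ fun s => s ≠ x ∧ next s l ≠ x, sum_congr rfl unaffected]
  gcongr
  calc ∑ s with ¬(s ≠ x ∧ next s l ≠ x), q (retract x y s) (retract x y (next s l)) ^ 2
      ≤ #{s | ¬(s ≠ x ∧ next s l ≠ x)} • (81 * edgeEnergy q (· ≠ x)) :=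
        sum_le_card_nsmul _ _ _ fun s _ => sq_cost_retract_next_le hq hd hN hy s l
    _ ≤ 2 • (81 * edgeEnergy q (· ≠ x)) :=
        nsmul_le_nsmul_left (by linarith [edgeEnergy_nonneg q (· ≠ x)])
          ((card_le_card affected_subset).trans card_le_two)
    _ = 162 * edgeEnergy q (· ≠ x) := by rw [two_nsmul]; ring

theorem sum_sq_cost_ne_le (hq : IsSwapCost q) (hd : 2 ≤ d) (hN : 1 ≤ N) (x : Grid d N) :
    ∑ s with s ≠ x, ∑ t with t ≠ x, q s t ^ 2 ≤
      2608 * d ^ 2 * (N + 1) ^ 2 * Fintype.card (Grid d N) * edgeEnergy q (· ≠ x) := by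
  obtain ⟨y, hy⟩ := exists_adjAlong hN x ⟨0, by omega⟩
  have interior_le : ∑ l : Fin d, ∑ s with s ≠ x ∧ next s l ≠ x, q s (next s l) ^ 2 ≤
      d * edgeEnergy q (· ≠ x) := by
    convert sum_sq_cost_next_le_edgeEnergy hq (· ≠ x)
  have steps_le : ∑ l : Fin d, ∑ s, q (retract x y s) (retract x y (next s l)) ^ 2 ≤
      163 * d * edgeEnergy q (· ≠ x) :=
    calc ∑ l : Fin d, ∑ s, q (retract x y s) (retract x y (next s l)) ^ 2
        ≤ ∑ l : Fin d, (∑ s with s ≠ x ∧ next s l ≠ x, q s (next s l) ^ 2 +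
            162 * edgeEnergy q (· ≠ x)) :=
          sum_le_sum fun l _ => sum_sq_cost_retract_next_le hq hd hN hy l
      _ ≤ d * edgeEnergy q (· ≠ x) + d * (162 * edgeEnergy q (· ≠ x)) := by
          rw [sum_add_distrib]
          exact add_le_add interior_le (by simp)
      _ = _ := by ring
  calc ∑ s with s ≠ x, ∑ t with t ≠ x, q s t ^ 2
      = ∑ s with s ≠ x, ∑ t with t ≠ x, q (retract x y s) (retract x y t) ^ 2 := by
        refine sum_congr rfl fun s hs => sum_congr rfl fun t ht => ?_
        rw [retract_of_ne y (mem_filter.1 hs).2, retract_of_ne y (mem_filter.1 ht).2]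
    _ ≤ ∑ s, ∑ t, q (retract x y s) (retract x y t) ^ 2 := by
        refine (sum_le_univ_sum_of_nonneg fun _ => sum_nonneg fun _ _ => sq_nonneg _).trans ?_
        exact sum_le_sum fun s _ => sum_le_univ_sum_of_nonneg fun _ => sq_nonneg _
    _ ≤ 16 * d * (N + 1) ^ 2 * Fintype.card (Grid d N) *
          ∑ l : Fin d, ∑ s, q (retract x y s) (retract x y (next s l)) ^ 2 :=
        sum_sq_cost_le_sum_next (hq.comp (retract x y))
    _ ≤ 16 * d * (N + 1) ^ 2 * Fintype.card (Grid d N) *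
          (163 * d * edgeEnergy q (· ≠ x)) := by gcongr
    _ = _ := by ring

theorem sum_sq_cost_le (hq : IsSwapCost q) : ∑ s, ∑ t, q s t ^ 2 ≤
    16 * d ^ 2 * (N + 1) ^ 2 * Fintype.card (Grid d N) * edgeEnergy q fun _ => True :=
  calc ∑ s, ∑ t, q s t ^ 2
      ≤ 16 * d * (N + 1) ^ 2 * Fintype.card (Grid d N) * ∑ k : Fin d, ∑ s, q s (next s k) ^ 2 :=
        sum_sq_cost_le_sum_next hq
    _ ≤ 16 * d * (N + 1) ^ 2 * Fintype.card (Grid d N) *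
          (d * edgeEnergy q fun _ => True) := by
        gcongr
        simpa using sum_sq_cost_next_le_edgeEnergy hq fun _ => True
    _ = _ := by ring

theorem sum_sq_cost_filter_le (hq : IsSwapCost q) (hd : 2 ≤ d) (hN : 1 ≤ N) {P : Grid d N → Prop}
    (hP : {s | ¬P s}.Subsingleton) : ∑ s with P s, ∑ t with P t, q s t ^ 2 ≤
      2608 * d ^ 2 * (N + 1) ^ 2 * Fintype.card (Grid d N) * edgeEnergy q P := by
  rcases hP.eq_empty_or_singleton with hempty | ⟨x, hx⟩
  · obtain rfl : P = fun _ => True :=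
      funext fun s => eq_true (not_not.1 (Set.eq_empty_iff_forall_notMem.1 hempty s))
    simp only [filter_true]
    refine (sum_sq_cost_le hq).trans ?_
    gcongr
    · exact edgeEnergy_nonneg _ _
    · norm_num
  · obtain rfl : P = (· ≠ x) := funext fun s => propext <| by
      simpa using not_congr (Set.ext_iff.1 hx s)
    convert sum_sq_cost_ne_le hq hd hN x

/-- The sup-norm distance in the grid. -/
def supDist (x w : Grid d N) : ℕ := univ.sup fun k => ((x k : ℤ) - w k).natAbs

theorem supDist_le {x w : Grid d N} {r : ℕ} :
    supDist x w ≤ r ↔ ∀ k, (x k : ℕ) ≤ w k + r ∧ (w k : ℕ) ≤ x k + r := by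
  simp only [supDist, Finset.sup_le_iff, mem_univ, true_imp_iff]
  exact forall_congr' fun k => by omega

theorem Adj.supDist_le_one {s t : Grid d N} (h : Adj s t) : supDist s t ≤ 1 := by
  refine supDist_le.2 fun k => ?_
  have hk : (((s k : ℕ) : ℤ) - (t k : ℕ)) ^ 2 ≤ 1 := by
    rw [← show ∑ j, (((s j : ℕ) : ℤ) - (t j : ℕ)) ^ 2 = 1 from h]
    exact single_le_sum (f := fun j => (((s j : ℕ) : ℤ) - (t j : ℕ)) ^ 2)
      (fun _ _ => sq_nonneg _) (mem_univ k)
  have := abs_le.1 (sq_le_one_iff_abs_le_one _ |>.1 hk)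
  omega

theorem card_supDist_le_le (x : Grid d N) (j : ℕ) : #{w | supDist x w ≤ j} ≤ (2 * j + 1) ^ d := by
  have interval_card (k : Fin d) :
      #{c : Fin (N + 1) | (x k : ℕ) ≤ c + j ∧ (c : ℕ) ≤ x k + j} ≤ 2 * j + 1 :=
    calc #{c : Fin (N + 1) | (x k : ℕ) ≤ c + j ∧ (c : ℕ) ≤ x k + j}
        ≤ #(Icc ((x k : ℕ) - j) (x k + j)) :=
          card_le_card_of_injOn Fin.val (fun c hc => by simp at hc ⊢; omega)
            Fin.val_injective.injOn
      _ ≤ 2 * j + 1 := by rw [Nat.card_Icc]; omega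
  calc #{w | supDist x w ≤ j}
      ≤ #(Fintype.piFinset fun k =>
          ({c : Fin (N + 1) | (x k : ℕ) ≤ c + j ∧ (c : ℕ) ≤ x k + j} : Finset _)) :=
        card_le_card fun w hw => by simpa [supDist_le] using hw
    _ ≤ ∏ _k : Fin d, (2 * j + 1) := by
        rw [Fintype.card_piFinset]
        exact prod_le_prod' fun k _ => interval_card k
    _ = (2 * j + 1) ^ d := by simp

theorem card_adj_le (s : Grid d N) : #{t | Adj s t} ≤ 3 ^ d :=
  (card_le_card (monotone_filter_right _ fun _ _ h => h.supDist_le_one)).trans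
    (card_supDist_le_le s 1)

theorem exists_supDist_eq {x w : Grid d N} {r : ℕ} (hr : r ≤ supDist x w) :
    ∃ u, supDist x u = r := by
  rcases Nat.eq_zero_or_pos r with rfl | hpos
  · exact ⟨x, Nat.le_zero.1 <| supDist_le.2 fun k => ⟨le_rfl, le_rfl⟩⟩
  obtain ⟨k, -, hk⟩ : ∃ k ∈ univ, r ≤ ((x k : ℤ) - w k).natAbs :=
    (Finset.le_sup_iff hpos).1 hr
  obtain ⟨c, hc⟩ : ∃ c : Fin (N + 1), ((x k : ℤ) - c).natAbs = r := by
    rcases le_total (x k : ℕ) (w k) with h | h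
    · exact ⟨⟨x k + r, by omega⟩, by simp⟩
    · exact ⟨⟨x k - r, by omega⟩, by simp; omega⟩
  refine ⟨Function.update x k c, le_antisymm (Finset.sup_le fun j _ => ?_) ?_⟩
  · by_cases hj : j = k
    · subst hj
      rw [Function.update_self, hc]
    · simp [Function.update_of_ne hj]
  · calc r = ((x k : ℤ) - (Function.update x k c k : Fin (N + 1))).natAbs := by
          rw [Function.update_self, hc]
      _ ≤ supDist x (Function.update x k c) :=
          le_sup (f := fun j => ((x j : ℤ) - (Function.update x k c j : Fin (N + 1))).natAbs)
            (mem_univ k)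

theorem supDist_le_card_supDist_lt (x w : Grid d N) :
    supDist x w ≤ #{u | supDist x u < supDist x w} :=
  calc supDist x w = #(range (supDist x w)) := (card_range _).symm
    _ ≤ #(image (supDist x) {u | supDist x u < supDist x w}) := card_le_card fun r hr => by
        obtain ⟨u, rfl⟩ := exists_supDist_eq (mem_range.1 hr).le
        exact mem_image_of_mem _ (by simpa using hr)
    _ ≤ _ := card_image_le

theorem two_le_card (hd : d ≠ 0) (hN : 1 ≤ N) : 2 ≤ Fintype.card (Grid d N) := by
  have card_eq : Fintype.card (Grid d N) = (N + 1) ^ d := by simp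
  exact card_eq ▸ (show 2 ≤ N + 1 by omega).trans (Nat.le_self_pow hd _)

/-- An upper bound, uniform in the side length, for `∑ w, (|x - w|_∞ + 1) β ^ |x - w|_∞`. -/
def shellSeries (d : ℕ) (β : ℝ) : ℝ := ∑' j : ℕ, (2 * j + 1) ^ d * ((j + 1) * β ^ j)

variable {β : ℝ}

theorem summable_shellSeries (d : ℕ) (hβ0 : 0 ≤ β) (hβ1 : β < 1) :
    Summable fun j : ℕ => (2 * j + 1 : ℝ) ^ d * ((j + 1) * β ^ j) := by
  have majorant : Summable fun j : ℕ => (3 : ℝ) ^ d * 2 * ((j : ℝ) ^ (d + 1) * β ^ j) :=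
    (summable_pow_mul_geometric_of_norm_lt_one (d + 1)
      (by rwa [Real.norm_of_nonneg hβ0] : ‖β‖ < 1)).mul_left _
  rw [← summable_nat_add_iff 1] at majorant ⊢
  refine majorant.of_nonneg_of_le (fun j => by positivity) fun j => ?_
  push_cast
  calc (2 * ((j : ℝ) + 1) + 1) ^ d * ((j + 1 + 1) * β ^ (j + 1))
      ≤ (3 * (j + 1)) ^ d * ((2 * (j + 1)) * β ^ (j + 1)) := by
        have := j.cast_nonneg (α := ℝ)
        gcongr <;> linarith
    _ = _ := by rw [mul_pow]; ring

theorem sum_supDist_mul_pow_le (hβ0 : 0 ≤ β) (hβ1 : β < 1) (x : Grid d N) :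
    ∑ w, (supDist x w + 1 : ℝ) * β ^ supDist x w ≤ shellSeries d β := by
  have dist_mem_range (w : Grid d N) (_ : w ∈ univ) : supDist x w ∈ range (N + 1) :=
    mem_range_succ_iff.2 (supDist_le.2 fun k => by omega)
  rw [← sum_fiberwise_of_maps_to dist_mem_range]
  refine (sum_le_sum fun j _ => ?_).trans
    ((summable_shellSeries d hβ0 hβ1).sum_le_tsum (range (N + 1)) fun j _ => by positivity)
  calc ∑ w with supDist x w = j, (supDist x w + 1 : ℝ) * β ^ supDist x w
      = #{w | supDist x w = j} * ((j + 1) * β ^ j) := by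
        rw [sum_congr rfl fun w hw => by rw [(mem_filter.1 hw).2], sum_const, nsmul_eq_mul]
    _ ≤ (2 * j + 1) ^ d * ((j + 1) * β ^ j) := by
        gcongr
        exact_mod_cast (card_le_card (monotone_filter_right _ fun _ _ => le_of_eq)).trans
          (card_supDist_le_le x j)

end Grid

section GroupAverage

variable {G E : Type*} [Group G] [NormedAddCommGroup E] [InnerProductSpace ℝ E]
  (ρ : G →* (E ≃ₗᵢ[ℝ] E))

theorem isometricRep_mul_apply (g h : G) (f : E) : ρ (g * h) f = ρ g (ρ h f) := by
  rw [map_mul]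
  rfl

theorem norm_isometricRep_mul_sub_le (g h : G) (f : E) :
    ‖ρ (g * h) f - f‖ ≤ ‖ρ g f - f‖ + ‖ρ h f - f‖ :=
  calc ‖ρ (g * h) f - f‖ = ‖ρ g (ρ h f - f) + (ρ g f - f)‖ := by
        rw [isometricRep_mul_apply, map_sub, sub_add_sub_cancel]
    _ ≤ ‖ρ g (ρ h f - f)‖ + ‖ρ g f - f‖ := norm_add_le _ _
    _ = ‖ρ g f - f‖ + ‖ρ h f - f‖ := by rw [LinearIsometryEquiv.norm_map, add_comm]

theorem norm_isometricRep_conj_sub (g σ : G) (f : E) :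
    ‖ρ g (ρ σ f) - ρ σ f‖ = ‖ρ (σ⁻¹ * g * σ) f - f‖ := by
  rw [← (ρ σ).norm_map (ρ (σ⁻¹ * g * σ) f - f), map_sub, ← isometricRep_mul_apply,
    ← isometricRep_mul_apply]
  group

theorem inner_isometricRep_left (g : G) (u v : E) :
    inner ℝ (ρ g u) v = inner ℝ u (ρ g⁻¹ v) := by
  rw [← (ρ g).inner_map_map u, ← isometricRep_mul_apply, mul_inv_cancel, map_one,
    LinearIsometryEquiv.coe_one, id]

variable [Fintype G]

/-- The average of an isometric representation over a subgroup; it is the orthogonal projection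
onto the vectors invariant under that subgroup. -/
def groupAvg (H : Subgroup G) : E →ₗ[ℝ] E :=
  (Fintype.card H : ℝ)⁻¹ • ∑ σ : H, ((ρ σ).toLinearEquiv : E →ₗ[ℝ] E)

theorem groupAvg_apply (H : Subgroup G) (f : E) :
    groupAvg ρ H f = (Fintype.card H : ℝ)⁻¹ • ∑ σ : H, ρ σ f := by
  simp [groupAvg, LinearMap.sum_apply]

variable {H H' : Subgroup G} {f : E}

theorem isometricRep_groupAvg {g : G} (hg : g ∈ H) (f : E) :
    ρ g (groupAvg ρ H f) = groupAvg ρ H f := by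
  rw [groupAvg_apply, map_smul, map_sum,
    ← Equiv.sum_comp (Equiv.mulLeft (⟨g, hg⟩ : H)) fun σ => ρ σ f]
  simp

theorem groupAvg_isometricRep {g : G} (hg : g ∈ H) (f : E) :
    groupAvg ρ H (ρ g f) = groupAvg ρ H f := by
  rw [groupAvg_apply, groupAvg_apply,
    ← Equiv.sum_comp (Equiv.mulRight (⟨g, hg⟩ : H)) fun σ => ρ σ f]
  simp

theorem groupAvg_eq_self (hf : ∀ g ∈ H, ρ g f = f) : groupAvg ρ H f = f := by
  rw [groupAvg_apply, sum_congr rfl fun (σ : H) _ => hf σ σ.2, sum_const, card_univ,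
    ← Nat.cast_smul_eq_nsmul ℝ, smul_smul, inv_mul_cancel₀ (by positivity), one_smul]

theorem groupAvg_groupAvg_of_le (hH : H' ≤ H) (f : E) :
    groupAvg ρ H (groupAvg ρ H' f) = groupAvg ρ H f := by
  rw [groupAvg_apply ρ H', map_smul, map_sum,
    sum_congr rfl fun (σ : H') _ => groupAvg_isometricRep ρ (hH σ.2) f, sum_const, card_univ,
    ← Nat.cast_smul_eq_nsmul ℝ, smul_smul, inv_mul_cancel₀ (by positivity), one_smul]

theorem isometricRep_groupAvg_of_commute {g : G} (hg : ∀ σ ∈ H, Commute g σ) (hf : ρ g f = f) :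
    ρ g (groupAvg ρ H f) = groupAvg ρ H f := by
  rw [groupAvg_apply, map_smul, map_sum]
  congr! 2 with σ
  rw [← isometricRep_mul_apply, (hg σ σ.2).eq, isometricRep_mul_apply, hf]

theorem inner_groupAvg_left (H : Subgroup G) (u v : E) :
    inner ℝ (groupAvg ρ H u) v = inner ℝ u (groupAvg ρ H v) := by
  rw [groupAvg_apply, groupAvg_apply, real_inner_smul_left, real_inner_smul_right, sum_inner,
    inner_sum, ← Equiv.sum_comp (Equiv.inv H) fun σ => inner ℝ u (ρ σ v)]
  simp only [inner_isometricRep_left, Equiv.inv_apply, InvMemClass.coe_inv]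

theorem norm_sub_sq_eq_groupAvg_add (f : E) {v : E} (hv : ∀ g ∈ H, ρ g v = v) :
    ‖f - v‖ ^ 2 = ‖f - groupAvg ρ H f‖ ^ 2 + ‖groupAvg ρ H f - v‖ ^ 2 := by
  have orthogonal : inner ℝ (f - groupAvg ρ H f) (groupAvg ρ H f - v) = 0 := by
    have invariant : groupAvg ρ H (groupAvg ρ H f - v) = groupAvg ρ H f - v := by
      rw [map_sub, groupAvg_groupAvg_of_le ρ le_rfl, groupAvg_eq_self ρ hv]
    rw [inner_sub_left, inner_groupAvg_left, invariant, sub_self]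
  rw [← sub_add_sub_cancel f (groupAvg ρ H f) v, norm_add_sq_real, orthogonal]
  ring

theorem norm_groupAvg_le (H : Subgroup G) (f : E) : ‖groupAvg ρ H f‖ ≤ ‖f‖ := by
  have card_pos : (0 : ℝ) < Fintype.card H := by positivity
  rw [groupAvg_apply, norm_smul, norm_inv, Real.norm_of_nonneg card_pos.le,
    inv_mul_le_iff₀ card_pos]
  exact (norm_sum_le _ _).trans (by simp)

theorem norm_sub_groupAvg_sq (H : Subgroup G) (f : E) :
    ‖f - groupAvg ρ H f‖ ^ 2 = ‖f‖ ^ 2 - inner ℝ f (groupAvg ρ H f) := by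
  have idempotent : inner ℝ (groupAvg ρ H f) (groupAvg ρ H f) = inner ℝ f (groupAvg ρ H f) := by
    rw [inner_groupAvg_left, groupAvg_groupAvg_of_le ρ le_rfl]
  rw [norm_sub_sq_real, ← real_inner_self_eq_norm_sq (groupAvg ρ H f), idempotent]
  ring

theorem norm_isometricRep_groupAvg_sub_sq_le (H : Subgroup G) (g : G) (f : E) :
    ‖ρ g (groupAvg ρ H f) - groupAvg ρ H f‖ ^ 2 ≤
      (Fintype.card H : ℝ)⁻¹ * ∑ σ : H, ‖ρ ((σ : G)⁻¹ * g * σ) f - f‖ ^ 2 := by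
  have difference : ρ g (groupAvg ρ H f) - groupAvg ρ H f =
      (Fintype.card H : ℝ)⁻¹ • ∑ σ : H, (ρ g (ρ σ f) - ρ σ f) := by
    rw [groupAvg_apply, map_smul, map_sum, ← smul_sub, sum_sub_distrib]
  calc ‖ρ g (groupAvg ρ H f) - groupAvg ρ H f‖ ^ 2
      = (Fintype.card H : ℝ)⁻¹ ^ 2 * ‖∑ σ : H, (ρ g (ρ σ f) - ρ σ f)‖ ^ 2 := by
        rw [difference, norm_smul, mul_pow, Real.norm_of_nonneg (by positivity)]
    _ ≤ (Fintype.card H : ℝ)⁻¹ ^ 2 * (∑ σ : H, ‖ρ ((σ : G)⁻¹ * g * σ) f - f‖) ^ 2 := by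
        simp only [← norm_isometricRep_conj_sub]
        gcongr
        exact norm_sum_le _ _
    _ ≤ (Fintype.card H : ℝ)⁻¹ ^ 2 *
          (Fintype.card H * ∑ σ : H, ‖ρ ((σ : G)⁻¹ * g * σ) f - f‖ ^ 2) := by
        gcongr
        exact sq_sum_le_card_mul_sum_sq
    _ = _ := by field_simp

theorem exists_invariant_norm_sub_sq_le {ι : Type*} (K : ι → Subgroup G)
    (hK : Pairwise fun i j => ∀ g ∈ K i, ∀ h ∈ K j, Commute g h) (f : E) (J : Finset ι) :
    ∃ v : E, (∀ j ∈ J, ∀ g ∈ K j, ρ g v = v) ∧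
      ‖f - v‖ ^ 2 ≤ ∑ j ∈ J, ‖f - groupAvg ρ (K j) f‖ ^ 2 := by
  induction J using Finset.induction_on with
  | empty => exact ⟨f, by simp, by simp⟩
  | insert i J hi ih =>
    obtain ⟨v, hv, hle⟩ := ih
    refine ⟨groupAvg ρ (K i) v, fun j hj g hg => ?_, ?_⟩
    · rcases mem_insert.1 hj with rfl | hj
      · exact isometricRep_groupAvg ρ hg v
      · have hij : i ≠ j := fun h => hi (h ▸ hj)
        exact isometricRep_groupAvg_of_commute ρ (hK hij.symm g hg) (hv j hj g hg)
    · rw [sum_insert hi,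
        norm_sub_sq_eq_groupAvg_add ρ f fun g hg => isometricRep_groupAvg ρ hg v, ← map_sub]
      gcongr
      exact (pow_le_pow_left₀ (norm_nonneg _) (norm_groupAvg_le ρ _ _) 2).trans hle

end GroupAverage

theorem sum_sum_erase_of_symm {S : Type*} [DecidableEq S] {D : S → S → ℝ}
    (hsymm : ∀ s t, D s t = D t s) (hself : ∀ s, D s s = 0) {W : Finset S} {s : S} (hs : s ∈ W) :
    ∑ a ∈ W.erase s, ∑ b ∈ W.erase s, D a b =
      ∑ a ∈ W, ∑ b ∈ W, D a b - 2 * ∑ t ∈ W, D s t := by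
  simp only [sum_erase_eq_sub hs, sum_sub_distrib, hself, hsymm _ s]
  ring

section SymmetricGroup

variable {S : Type*} {W W' : Finset S}

/-- The permutations which fix every point outside `W`. -/
def permsOn (W : Finset S) : Subgroup (Equiv.Perm S) :=
  fixingSubgroup (Equiv.Perm S) (W : Set S)ᶜ

theorem mem_permsOn {σ : Equiv.Perm S} : σ ∈ permsOn W ↔ ∀ v ∉ W, σ v = v := by
  simp [permsOn, mem_fixingSubgroup_iff]

theorem permsOn_mono (h : W ⊆ W') : permsOn W ≤ permsOn W' := fun _ hσ =>
  mem_permsOn.2 fun v hv => mem_permsOn.1 hσ v fun hv' => hv (h hv')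

theorem apply_mem_iff_of_mem_permsOn {σ : Equiv.Perm S} (hσ : σ ∈ permsOn W) {v : S} :
    σ v ∈ W ↔ v ∈ W := by
  refine ⟨fun h => ?_, fun hv => ?_⟩ <;> by_contra hnot
  · rw [mem_permsOn.1 hσ v hnot] at h
    exact hnot h
  · rw [σ.injective (mem_permsOn.1 hσ _ hnot)] at hnot
    exact hnot hv

theorem sum_comp_of_mem_permsOn {σ : Equiv.Perm S} (hσ : σ ∈ permsOn W) {M : Type*}
    [AddCommMonoid M] (F : S → M) : ∑ t ∈ W, F (σ t) = ∑ t ∈ W, F t :=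
  sum_equiv σ (fun _ => (apply_mem_iff_of_mem_permsOn hσ).symm) fun _ _ => rfl

theorem commute_of_mem_permsOn_of_disjoint (h : Disjoint W W') {σ τ : Equiv.Perm S}
    (hσ : σ ∈ permsOn W) (hτ : τ ∈ permsOn W') : Commute σ τ :=
  Equiv.Perm.Disjoint.commute fun v => by
    by_cases hv : v ∈ W
    · exact .inr (mem_permsOn.1 hτ v (disjoint_left.1 h hv))
    · exact .inl (mem_permsOn.1 hσ v hv)

variable [DecidableEq S]

theorem swap_mem_permsOn {s t : S} (hs : s ∈ W) (ht : t ∈ W) : Equiv.swap s t ∈ permsOn W :=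
  mem_permsOn.2 fun _ hv =>
    Equiv.swap_apply_of_ne_of_ne (fun h => hv (h ▸ hs)) fun h => hv (h ▸ ht)

theorem swap_conj_of_mem_permsOn_erase {σ : Equiv.Perm S} {s : S} (hσ : σ ∈ permsOn (W.erase s))
    (t : S) : σ⁻¹ * Equiv.swap s t * σ = Equiv.swap s (σ⁻¹ t) := by
  have fixes : σ⁻¹ s = s := mem_permsOn.1 (inv_mem hσ) s (notMem_erase s W)
  rw [← fixes, Equiv.swap_apply_apply, inv_inv, fixes]

/-- Writing `σ (s t) = (s σ(t)) τ`, the permutation `τ` fixes `s`. -/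
theorem swap_apply_mul_swap_mem_permsOn_erase {σ : Equiv.Perm S} (hσ : σ ∈ permsOn W) {s t : S}
    (hs : s ∈ W) (ht : t ∈ W) :
    Equiv.swap s (σ t) * σ * Equiv.swap s t ∈ permsOn (W.erase s) := by
  refine mem_permsOn.2 fun v hv => ?_
  by_cases hvs : v = s
  · subst hvs
    simp
  · have hσt : σ t ∈ W := (apply_mem_iff_of_mem_permsOn hσ).2 ht
    exact mem_permsOn.1 (mul_mem (mul_mem (swap_mem_permsOn hs hσt) hσ) (swap_mem_permsOn hs ht))
      v fun h => hv (mem_erase.2 ⟨hvs, h⟩)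

variable {E : Type*} [NormedAddCommGroup E] [InnerProductSpace ℝ E]
  (ρ : Equiv.Perm S →* (E ≃ₗᵢ[ℝ] E))

theorem isSwapCost_norm_swap_sub (f : E) : IsSwapCost fun s t => ‖ρ (Equiv.swap s t) f - f‖ := by
  have self (s : S) : ‖ρ (Equiv.swap s s) f - f‖ = 0 := by
    rw [Equiv.swap_self, ← Equiv.Perm.one_def, map_one]
    simp
  refine ⟨fun _ _ => norm_nonneg _, fun s t => by rw [Equiv.swap_comm], self, fun s t u => ?_⟩
  by_cases hts : t = s
  · rw [hts, self]
    positivity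
  by_cases htu : t = u
  · rw [htu]
    linarith [norm_nonneg (ρ (Equiv.swap s u) f - f), norm_nonneg (ρ (Equiv.swap u u) f - f)]
  rw [← Equiv.swap_mul_swap_mul_swap htu hts, Equiv.swap_comm u s, Equiv.swap_comm t u]
  linarith [norm_isometricRep_mul_sub_le ρ (Equiv.swap s u * Equiv.swap u t) (Equiv.swap s u) f,
    norm_isometricRep_mul_sub_le ρ (Equiv.swap s u) (Equiv.swap u t) f]

variable [Fintype S]

theorem sum_norm_swap_groupAvg_sub_sq_le (W : Finset S) (s : S) (f : E) :
    ∑ t ∈ W, ‖ρ (Equiv.swap s t) (groupAvg ρ (permsOn (W.erase s)) f) -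
        groupAvg ρ (permsOn (W.erase s)) f‖ ^ 2 ≤
      ∑ t ∈ W, ‖ρ (Equiv.swap s t) f - f‖ ^ 2 := by
  have reindex (σ : permsOn (W.erase s)) :
      ∑ t ∈ W, ‖ρ ((σ : Equiv.Perm S)⁻¹ * Equiv.swap s t * σ) f - f‖ ^ 2 =
        ∑ t ∈ W, ‖ρ (Equiv.swap s t) f - f‖ ^ 2 := by
    simp only [swap_conj_of_mem_permsOn_erase σ.2]
    exact sum_comp_of_mem_permsOn (inv_mem (permsOn_mono (erase_subset s W) σ.2))
      fun t => ‖ρ (Equiv.swap s t) f - f‖ ^ 2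
  refine (sum_le_sum fun t _ => norm_isometricRep_groupAvg_sub_sq_le ρ _ _ f).trans ?_
  rw [← mul_sum, sum_comm, sum_congr rfl fun σ _ => reindex σ, sum_const, card_univ, nsmul_eq_mul,
    inv_mul_cancel_left₀ (by positivity)]

theorem groupAvg_permsOn_eq_coset_avg {s : S} (hs : s ∈ W) {v : E}
    (hv : ∀ σ ∈ permsOn (W.erase s), ρ σ v = v) :
    groupAvg ρ (permsOn W) v = (#W : ℝ)⁻¹ • ∑ t ∈ W, ρ (Equiv.swap s t) v := by
  have card_ne_zero : (#W : ℝ) ≠ 0 := by simpa using ne_empty_of_mem hs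
  have invariant (σ) (hσ : σ ∈ permsOn W) : ρ σ ((#W : ℝ)⁻¹ • ∑ t ∈ W, ρ (Equiv.swap s t) v) =
      (#W : ℝ)⁻¹ • ∑ t ∈ W, ρ (Equiv.swap s t) v := by
    rw [map_smul, map_sum, ← sum_comp_of_mem_permsOn hσ fun t => ρ (Equiv.swap s t) v]
    congr 1
    refine sum_congr rfl fun t ht => ?_
    calc ρ σ (ρ (Equiv.swap s t) v)
        = ρ (Equiv.swap s (σ t)) (ρ (Equiv.swap s (σ t) * σ * Equiv.swap s t) v) := by
          rw [← isometricRep_mul_apply, ← isometricRep_mul_apply, mul_assoc (Equiv.swap s (σ t)),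
            Equiv.swap_mul_self_mul]
      _ = ρ (Equiv.swap s (σ t)) v := by
          rw [hv _ (swap_apply_mul_swap_mem_permsOn_erase hσ hs ht)]
  calc groupAvg ρ (permsOn W) v
      = groupAvg ρ (permsOn W) ((#W : ℝ)⁻¹ • ∑ t ∈ W, ρ (Equiv.swap s t) v) := by
        rw [map_smul, map_sum, sum_congr rfl fun t ht => groupAvg_isometricRep ρ
          (swap_mem_permsOn hs ht) v, sum_const, ← Nat.cast_smul_eq_nsmul ℝ, smul_smul,
          inv_mul_cancel₀ card_ne_zero, one_smul]
    _ = _ := groupAvg_eq_self ρ invariant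

theorem norm_groupAvg_erase_sub_groupAvg_sq_le {s : S} (hs : s ∈ W) (f : E) :
    2 * (#W : ℝ) * ‖groupAvg ρ (permsOn (W.erase s)) f - groupAvg ρ (permsOn W) f‖ ^ 2 ≤
      ∑ t ∈ W, ‖ρ (Equiv.swap s t) f - f‖ ^ 2 := by
  have card_ne_zero : (#W : ℝ) ≠ 0 := by simpa using ne_empty_of_mem hs
  refine le_trans (le_of_eq ?_) (sum_norm_swap_groupAvg_sub_sq_le ρ W s f)
  rw [← groupAvg_groupAvg_of_le ρ (permsOn_mono (erase_subset s W)) f]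
  have invariant (σ) (hσ : σ ∈ permsOn (W.erase s)) := isometricRep_groupAvg ρ hσ f
  generalize groupAvg ρ (permsOn (W.erase s)) f = v at *
  have norm_swap_sub_sq (t : S) : ‖ρ (Equiv.swap s t) v - v‖ ^ 2 =
      2 * (‖v‖ ^ 2 - inner ℝ v (ρ (Equiv.swap s t) v)) := by
    rw [norm_sub_sq_real, LinearIsometryEquiv.norm_map, real_inner_comm]
    ring
  rw [norm_sub_groupAvg_sq, groupAvg_permsOn_eq_coset_avg ρ hs invariant, real_inner_smul_right,
    inner_sum]
  simp only [norm_swap_sub_sq, ← mul_sum, sum_sub_distrib, sum_const, nsmul_eq_mul]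
  field_simp

theorem groupAvg_permsOn_of_card_le_one (hW : #W ≤ 1) (f : E) : groupAvg ρ (permsOn W) f = f := by
  refine groupAvg_eq_self ρ fun σ hσ => ?_
  obtain rfl : σ = 1 := Equiv.ext fun v => by
    by_cases hv : v ∈ W
    · exact card_le_one.1 hW _ ((apply_mem_iff_of_mem_permsOn hσ).2 hv) _ hv
    · exact mem_permsOn.1 hσ v hv
  rw [map_one, LinearIsometryEquiv.coe_one, id]

theorem card_mul_norm_sub_groupAvg_sq_le (W : Finset S) (f : E) :
    #W * ‖f - groupAvg ρ (permsOn W) f‖ ^ 2 ≤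
      ∑ s ∈ W, ∑ t ∈ W, ‖ρ (Equiv.swap s t) f - f‖ ^ 2 := by
  induction W using Finset.strongInduction with
  | H W ih =>
  rcases le_or_gt #W 1 with hcard | hcard
  · rw [groupAvg_permsOn_of_card_le_one ρ hcard, sub_self, norm_zero, zero_pow two_ne_zero,
      mul_zero]
    positivity
  have hcost := isSwapCost_norm_swap_sub ρ f
  set total := ∑ s ∈ W, ∑ t ∈ W, ‖ρ (Equiv.swap s t) f - f‖ ^ 2 with total_def
  have total_nonneg : 0 ≤ total := by positivity
  have card_gt : (1 : ℝ) < #W := by exact_mod_cast hcard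
  have bound_fixing (s) (hs : s ∈ W) : (#W - 1 : ℝ) * ‖f - groupAvg ρ (permsOn W) f‖ ^ 2 ≤
      total - 2 * ∑ t ∈ W, ‖ρ (Equiv.swap s t) f - f‖ ^ 2 +
        2⁻¹ * ∑ t ∈ W, ‖ρ (Equiv.swap s t) f - f‖ ^ 2 := by
    have pythagoras := norm_sub_sq_eq_groupAvg_add ρ f fun g hg =>
      isometricRep_groupAvg ρ (permsOn_mono (erase_subset s W) hg) f
    have inductive_bound := ih (W.erase s) (erase_ssubset hs)
    rw [cast_card_erase_of_mem hs, sum_sum_erase_of_symm (fun s t => by rw [Equiv.swap_comm])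
      (fun s => by rw [hcost.self, zero_pow two_ne_zero]) hs] at inductive_bound
    have last_step := norm_groupAvg_erase_sub_groupAvg_sq_le ρ hs f
    rw [pythagoras, mul_add]
    linarith [sq_nonneg ‖groupAvg ρ (permsOn (W.erase s)) f - groupAvg ρ (permsOn W) f‖]
  have summed := sum_le_sum bound_fixing
  simp only [sum_add_distrib, sum_sub_distrib, ← mul_sum, sum_const, nsmul_eq_mul,
    ← total_def] at summed
  refine le_of_mul_le_mul_left ?_ (sub_pos.2 card_gt)
  linarith

theorem norm_sub_groupAvg_sq_le (W : Finset S) (f : E) :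
    ‖f - groupAvg ρ (permsOn W) f‖ ^ 2 ≤
      (#W : ℝ)⁻¹ * ∑ s ∈ W, ∑ t ∈ W, ‖ρ (Equiv.swap s t) f - f‖ ^ 2 := by
  rcases W.eq_empty_or_nonempty with rfl | hW
  · rw [groupAvg_permsOn_of_card_le_one ρ (by simp)]
    simp
  · rw [← div_eq_inv_mul, le_div_iff₀' (by exact_mod_cast hW.card_pos)]
    exact card_mul_norm_sub_groupAvg_sq_le ρ W f

end SymmetricGroup

section Sector

variable {S ι : Type*}

/-- The number of particles of `η` in `B`. -/
def particles (B : Finset S) (η : S → Bool) : ℕ := #{y ∈ B | η y = true}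

theorem exists_true_false_of_particles_le {W : Finset S} {η η' : S → Bool}
    (hcount : particles W η' ≤ particles W η) {v : S} (hv : v ∈ W) (hne : η v ≠ η' v) :
    ∃ s ∈ W, η s = true ∧ η' s = false := by
  by_contra! h
  have subset : ({y ∈ W | η y = true} : Finset S) ⊆ {y ∈ W | η' y = true} := fun y hy => by
    simp only [mem_filter] at hy ⊢
    exact ⟨hy.1, by simpa using h y hy.1 hy.2⟩
  have heq := Finset.ext_iff.1 (eq_of_subset_of_card_le subset hcount) v
  simp only [mem_filter, hv, true_and] at heq
  exact hne (Bool.eq_iff_iff.2 heq)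

theorem particles_comp_of_mem_permsOn {W B : Finset S} (h : W ⊆ B ∨ Disjoint W B)
    {σ : Equiv.Perm S} (hσ : σ ∈ permsOn W) (η : S → Bool) :
    particles B (η ∘ σ) = particles B η := by
  have apply_mem_iff (y : S) : σ y ∈ B ↔ y ∈ B := by
    by_cases hy : y ∈ W
    · have hσy := (apply_mem_iff_of_mem_permsOn hσ).2 hy
      rcases h with h | h
      · exact iff_of_true (h hσy) (h hy)
      · exact iff_of_false (disjoint_left.1 h hσy) (disjoint_left.1 h hy)
    · rw [mem_permsOn.1 hσ y hy]
  exact card_equiv σ fun y => by simp [apply_mem_iff]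

theorem particles_comp_of_pairwise_disjoint {W : ι → Finset S}
    (hdisj : Pairwise (Function.onFun Disjoint W)) {j : ι} {σ : Equiv.Perm S}
    (hσ : σ ∈ permsOn (W j)) (i : ι) (η : S → Bool) :
    particles (W i) (η ∘ σ) = particles (W i) η := by
  refine particles_comp_of_mem_permsOn ?_ hσ η
  rcases eq_or_ne j i with rfl | hij
  · exact .inl Subset.rfl
  · exact .inr (hdisj hij)

/-- The restriction of `F` to a set of configurations, extended by zero to a Euclidean vector. -/
def restrictVector (A : Finset (S → Bool)) (F : (S → Bool) → ℝ) : EuclideanSpace ℝ (S → Bool) :=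
  WithLp.toLp 2 fun η => if η ∈ A then F η else 0

theorem restrictVector_apply (A : Finset (S → Bool)) (F : (S → Bool) → ℝ) (η : S → Bool) :
    restrictVector A F η = if η ∈ A then F η else 0 :=
  rfl

variable [DecidableEq S]

/-- The Dirichlet form of the exchange of the occupations of the sites `s` and `t`, restricted to
the configurations in `A`. -/
def swapEnergy (A : Finset (S → Bool)) (F : (S → Bool) → ℝ) (s t : S) : ℝ :=
  ∑ η ∈ A, (F (η ∘ Equiv.swap s t) - F η) ^ 2

theorem swapEnergy_nonneg (A : Finset (S → Bool)) (F : (S → Bool) → ℝ) (s t : S) :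
    0 ≤ swapEnergy A F s t :=
  sum_nonneg fun _ _ => sq_nonneg _

theorem particles_erase_eq {B : Finset S} {x : S} {η η' : S → Bool} (hη : η x = true)
    (hη' : η' x = true) (hcount : particles B η = particles B η') :
    particles (B.erase x) η = particles (B.erase x) η' := by
  simp only [particles] at hcount
  simp [particles, filter_erase, card_erase_eq_ite, hη, hη', hcount]

theorem filter_comp_swap_ne_ssubset [Fintype S] {η η' : S → Bool} {s t : S}
    (hs : η s = true ∧ η' s = false) (ht : η t = false ∧ η' t = true) :
    ({v | (η ∘ Equiv.swap s t) v ≠ η' v} : Finset S) ⊂ ({v | η v ≠ η' v} : Finset S) := by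
  have agree_at_s : (η ∘ Equiv.swap s t) s = η' s := by simp [ht.1, hs.2]
  have agree_at_t : (η ∘ Equiv.swap s t) t = η' t := by simp [hs.1, ht.2]
  refine (ssubset_iff_of_subset fun v hv => ?_).2
    ⟨s, by simp [hs], fun h => (mem_filter.1 h).2 agree_at_s⟩
  simp only [mem_filter, mem_univ, true_and] at hv ⊢
  have hvs : v ≠ s := fun h => hv (h ▸ agree_at_s)
  have hvt : v ≠ t := fun h => hv (h ▸ agree_at_t)
  rwa [Function.comp_apply, Equiv.swap_apply_of_ne_of_ne hvs hvt] at hv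

theorem eq_of_particles_eq [Finite S] {W : ι → Finset S}
    (hdisj : Pairwise (Function.onFun Disjoint W)) {T : Type*} {g : (S → Bool) → T}
    (hg : ∀ j, ∀ s ∈ W j, ∀ t ∈ W j, ∀ η, g (η ∘ Equiv.swap s t) = g η) {η η' : S → Bool}
    (hcover : ∀ v, η v ≠ η' v → ∃ j, v ∈ W j)
    (hcount : ∀ j, particles (W j) η = particles (W j) η') : g η = g η' := by
  have := Fintype.ofFinite S
  induction hk : #{v | η v ≠ η' v} using Nat.strong_induction_on generalizing η with
  | h k ih =>
  by_cases hagree : ∀ v, η v = η' v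
  · rw [funext hagree]
  push Not at hagree
  obtain ⟨v, hv⟩ := hagree
  obtain ⟨j, hj⟩ := hcover v hv
  obtain ⟨s, hs, hηs⟩ := exists_true_false_of_particles_le (hcount j).ge hj hv
  obtain ⟨t, ht, hηt⟩ := exists_true_false_of_particles_le (hcount j).le hj hv.symm
  have fewer := filter_comp_swap_ne_ssubset hηs hηt.symm
  rw [← hg j s hs t ht η]
  refine ih _ (hk ▸ card_lt_card fewer) (fun u hu => hcover u ?_) (fun i => ?_) rfl
  · simpa using fewer.subset (mem_filter.2 ⟨mem_univ u, hu⟩)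
  · rw [particles_comp_of_pairwise_disjoint hdisj (swap_mem_permsOn hs ht), hcount i]

/-- The configurations with a particle at `x`, the tag, and with `M j` particles in each block
`blk j`. -/
def sector [Fintype S] (blk : ι → Finset S) (M : ι → ℕ) (x : S) : Finset (S → Bool) :=
  {η | η x = true ∧ ∀ j, particles (blk j) η = M j}

variable [Fintype S] {blk : ι → Finset S} {M : ι → ℕ} {x z : S} {j : ι}
  {η : S → Bool} {σ : Equiv.Perm S}

theorem mem_sector : η ∈ sector blk M x ↔ η x = true ∧ ∀ j, particles (blk j) η = M j := by
  simp [sector]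

theorem comp_mem_sector_iff (hdisj : Pairwise (Function.onFun Disjoint blk))
    (hσ : σ ∈ permsOn (blk j)) (hz : σ z = x) :
    η ∘ σ ∈ sector blk M z ↔ η ∈ sector blk M x := by
  simp only [mem_sector, Function.comp_apply, hz, particles_comp_of_pairwise_disjoint hdisj hσ]

theorem sum_sector_comp (hdisj : Pairwise (Function.onFun Disjoint blk))
    (hσ : σ ∈ permsOn (blk j)) (hz : σ z = x) (M : ι → ℕ) (F : (S → Bool) → ℝ) :
    ∑ η ∈ sector blk M x, F (η ∘ σ) = ∑ η ∈ sector blk M z, F η :=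
  sum_equiv (σ.symm.arrowCongr (.refl Bool)) (fun _ => (comp_mem_sector_iff hdisj hσ hz).symm)
    fun _ _ => rfl

theorem swap_comp_mem_sector_iff (hdisj : Pairwise (Function.onFun Disjoint blk)) {s t : S}
    (hs : s ∈ (blk j).erase x) (ht : t ∈ (blk j).erase x) :
    η ∘ Equiv.swap s t ∈ sector blk M x ↔ η ∈ sector blk M x :=
  comp_mem_sector_iff hdisj (swap_mem_permsOn (mem_of_mem_erase hs) (mem_of_mem_erase ht))
    (Equiv.swap_apply_of_ne_of_ne (ne_of_mem_erase hs).symm (ne_of_mem_erase ht).symm)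

theorem exists_forall_mem_sector_eq (hdisj : Pairwise (Function.onFun Disjoint blk))
    (hcover : ∀ v, ∃ j, v ∈ blk j) (M : ι → ℕ) {g : (S → Bool) → ℝ}
    (hg : ∀ j, ∀ s ∈ (blk j).erase x, ∀ t ∈ (blk j).erase x, ∀ η, g (η ∘ Equiv.swap s t) = g η) :
    ∃ c, ∀ η ∈ sector blk M x, g η = c := by
  rcases (sector blk M x).eq_empty_or_nonempty with hempty | ⟨η', hη'⟩
  · exact ⟨0, by simp [hempty]⟩
  rw [mem_sector] at hη'
  refine ⟨g η', fun η hη => ?_⟩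
  rw [mem_sector] at hη
  refine eq_of_particles_eq (W := fun j => (blk j).erase x) (fun i j hij => ?_) hg
    (fun v hv => ?_) fun j => particles_erase_eq hη.1 hη'.1 ((hη.2 j).trans (hη'.2 j).symm)
  · exact (hdisj hij).mono (erase_subset _ _) (erase_subset _ _)
  · obtain ⟨j, hj⟩ := hcover v
    refine ⟨j, mem_erase.2 ⟨?_, hj⟩⟩
    rintro rfl
    exact hv (hη.1.trans hη'.1.symm)

/-- The isometric action of the permutations of the sites on functions of the configuration. -/
def configRep (S : Type*) [Fintype S] [DecidableEq S] :
    Equiv.Perm S →* (EuclideanSpace ℝ (S → Bool) ≃ₗᵢ[ℝ] EuclideanSpace ℝ (S → Bool)) where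
  toFun σ := LinearIsometryEquiv.piLpCongrLeft 2 ℝ ℝ (σ.arrowCongr (.refl Bool))
  map_one' := by
    ext u η
    simp only [LinearIsometryEquiv.piLpCongrLeft_apply, LinearIsometryEquiv.coe_one]
    rfl
  map_mul' σ τ := by
    ext u η
    simp only [LinearIsometryEquiv.piLpCongrLeft_apply, LinearIsometryEquiv.mul_def,
      LinearIsometryEquiv.coe_trans, Function.comp_apply]
    rfl

theorem configRep_apply (σ : Equiv.Perm S) (u : EuclideanSpace ℝ (S → Bool)) (η : S → Bool) :
    configRep S σ u η = u (η ∘ σ) := by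
  simp only [configRep, MonoidHom.coe_mk, OneHom.coe_mk, LinearIsometryEquiv.piLpCongrLeft_apply]
  rfl

theorem norm_configRep_swap_restrictVector_sub_sq {A : Finset (S → Bool)} {s t : S}
    (hA : ∀ η, η ∘ Equiv.swap s t ∈ A ↔ η ∈ A) (F : (S → Bool) → ℝ) :
    ‖configRep S (Equiv.swap s t) (restrictVector A F) - restrictVector A F‖ ^ 2 =
      swapEnergy A F s t := by
  rw [EuclideanSpace.norm_sq_eq, swapEnergy, ← sum_filter_add_sum_filter_not univ (· ∈ A),
    filter_univ_mem, add_eq_left.2 (sum_eq_zero fun η hη => ?_)]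
  · refine sum_congr rfl fun η hη => ?_
    rw [PiLp.sub_apply, configRep_apply, restrictVector_apply, restrictVector_apply,
      if_pos ((hA η).2 hη), if_pos hη, Real.norm_eq_abs, sq_abs]
  · have hη : η ∉ A := (mem_filter.1 hη).2
    rw [PiLp.sub_apply, configRep_apply, restrictVector_apply, restrictVector_apply,
      if_neg (mt (hA η).1 hη), if_neg hη, sub_self, norm_zero, zero_pow two_ne_zero]

theorem exists_isSwapCost_sq_eq_swapEnergy (hdisj : Pairwise (Function.onFun Disjoint blk))
    (M : ι → ℕ) (x : S) (F : (S → Bool) → ℝ) :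
    ∃ q : S → S → ℝ, IsSwapCost q ∧ ∀ j, ∀ s ∈ (blk j).erase x, ∀ t ∈ (blk j).erase x,
      q s t ^ 2 = swapEnergy (sector blk M x) F s t :=
  ⟨_, isSwapCost_norm_swap_sub (configRep S) (restrictVector (sector blk M x) F), fun _ _ hs _ ht =>
    norm_configRep_swap_restrictVector_sub_sq
      (fun _ => swap_comp_mem_sector_iff hdisj hs ht) F⟩

theorem exists_sum_sector_sub_sq_le_sum_swapEnergy [Fintype ι]
    (hdisj : Pairwise (Function.onFun Disjoint blk)) (hcover : ∀ v, ∃ j, v ∈ blk j) (M : ι → ℕ)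
    (x : S) (F : (S → Bool) → ℝ) :
    ∃ c, ∑ η ∈ sector blk M x, (F η - c) ^ 2 ≤ ∑ j, (#((blk j).erase x) : ℝ)⁻¹ *
      ∑ s ∈ (blk j).erase x, ∑ t ∈ (blk j).erase x, swapEnergy (sector blk M x) F s t := by
  set u := restrictVector (sector blk M x) F
  have commute : Pairwise fun i j => ∀ g ∈ permsOn ((blk i).erase x),
      ∀ h ∈ permsOn ((blk j).erase x), Commute g h := fun i j hij g hg h hh =>
    commute_of_mem_permsOn_of_disjoint
      ((hdisj hij).mono (erase_subset _ _) (erase_subset _ _)) hg hh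
  obtain ⟨g, hg, hle⟩ := exists_invariant_norm_sub_sq_le (configRep S) _ commute u univ
  obtain ⟨c, hc⟩ := exists_forall_mem_sector_eq (g := g) hdisj hcover M fun j s hs t ht η => by
    rw [← configRep_apply, hg j (mem_univ j) _ (swap_mem_permsOn hs ht)]
  refine ⟨c, ?_⟩
  calc ∑ η ∈ sector blk M x, (F η - c) ^ 2
      = ∑ η ∈ sector blk M x, ‖(u - g) η‖ ^ 2 := sum_congr rfl fun η hη => by
        rw [PiLp.sub_apply, restrictVector_apply, if_pos hη, hc η hη, Real.norm_eq_abs, sq_abs]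
    _ ≤ ‖u - g‖ ^ 2 := by
        rw [EuclideanSpace.norm_sq_eq]
        exact sum_le_univ_sum_of_nonneg fun _ => sq_nonneg _
    _ ≤ ∑ j, ‖u - groupAvg (configRep S) (permsOn ((blk j).erase x)) u‖ ^ 2 := hle
    _ ≤ _ := sum_le_sum fun j _ => (norm_sub_groupAvg_sq_le (configRep S) _ u).trans_eq <| by
        congr! 4 with s hs t ht
        exact norm_configRep_swap_restrictVector_sub_sq
          (fun _ => swap_comp_mem_sector_iff hdisj hs ht) F

end Sector

section Occupied

variable {S ι : Type*} [DecidableEq S]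

theorem particles_sdiff_add_card {A B : Finset S} (hAB : A ⊆ B) {η : S → Bool}
    (hη : ∀ a ∈ A, η a = true) : particles (B \ A) η + #A = particles B η := by
  have filter_sdiff_eq : ({y ∈ B \ A | η y = true} : Finset S) = {y ∈ B | η y = true} \ A := by
    ext y
    simp only [mem_filter, mem_sdiff]
    tauto
  rw [particles, filter_sdiff_eq]
  exact card_sdiff_add_card_eq_card fun a ha => mem_filter.2 ⟨hAB ha, hη a ha⟩

variable [Fintype S]

/-- The configurations with `M j` particles in each block `blk j` and with a particle at each site
of `A`. -/
def occupied (blk : ι → Finset S) (M : ι → ℕ) (A : Finset S) : Finset (S → Bool) :=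
  {η | (∀ a ∈ A, η a = true) ∧ ∀ j, particles (blk j) η = M j}

variable {blk : ι → Finset S} {M : ι → ℕ} {A : Finset S} {i : ι} {η : S → Bool}

theorem mem_occupied :
    η ∈ occupied blk M A ↔ (∀ a ∈ A, η a = true) ∧ ∀ j, particles (blk j) η = M j := by
  simp [occupied]

theorem occupied_insert (u : S) :
    occupied blk M (insert u A) = {η ∈ occupied blk M A | η u = true} := by
  ext η
  simp only [mem_occupied, mem_filter, forall_mem_insert]
  tauto

theorem card_occupied_insert_eq (hdisj : Pairwise (Function.onFun Disjoint blk)) {u v : S}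
    (hu : u ∈ blk i \ A) (hv : v ∈ blk i \ A) :
    #(occupied blk M (insert u A)) = #(occupied blk M (insert v A)) := by
  rw [mem_sdiff] at hu hv
  have fixes (a : S) (ha : a ∈ A) : Equiv.swap u v a = a :=
    Equiv.swap_apply_of_ne_of_ne (fun h => hu.2 (h ▸ ha)) fun h => hv.2 (h ▸ ha)
  refine card_equiv ((Equiv.swap u v).arrowCongr (.refl Bool)) fun η => ?_
  have arrowCongr_eq : (Equiv.swap u v).arrowCongr (.refl Bool) η = η ∘ Equiv.swap u v := rfl
  rw [arrowCongr_eq, mem_occupied, mem_occupied, forall_mem_insert, forall_mem_insert]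
  simp only [particles_comp_of_pairwise_disjoint hdisj (swap_mem_permsOn hu.1 hv.1),
    Function.comp_apply, Equiv.swap_apply_right]
  refine and_congr_left' (and_congr_right' (forall₂_congr fun a ha => ?_))
  rw [fixes a ha]

theorem sum_card_occupied_insert (B : Finset S) :
    ∑ u ∈ B, #(occupied blk M (insert u A)) = ∑ η ∈ occupied blk M A, particles B η := by
  simp only [occupied_insert]
  exact sum_card_bipartiteAbove_eq_sum_card_bipartiteBelow fun u (η : S → Bool) => η u = true

theorem card_sdiff_mul_card_occupied_insert (hdisj : Pairwise (Function.onFun Disjoint blk))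
    (hA : A ⊆ blk i) {u : S} (hu : u ∈ blk i \ A) :
    #(blk i \ A) * #(occupied blk M (insert u A)) = (M i - #A) * #(occupied blk M A) := by
  calc #(blk i \ A) * #(occupied blk M (insert u A))
      = ∑ v ∈ blk i \ A, #(occupied blk M (insert v A)) := by
        rw [sum_congr rfl fun v hv => card_occupied_insert_eq hdisj hv hu, sum_const, smul_eq_mul]
    _ = ∑ _η ∈ occupied blk M A, (M i - #A) := by
        refine (sum_card_occupied_insert _).trans (sum_congr rfl fun _ hη => ?_)
        rw [mem_occupied] at hη
        rw [← hη.2 i, ← particles_sdiff_add_card hA hη.1, Nat.add_sub_cancel]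
    _ = (M i - #A) * #(occupied blk M A) := by rw [sum_const, smul_eq_mul, mul_comm]

theorem card_occupied_insert_le (hdisj : Pairwise (Function.onFun Disjoint blk)) {θ : ℝ}
    (hθ0 : 0 ≤ θ) (hθ1 : θ ≤ 1) (hM : (M i : ℝ) ≤ θ * #(blk i)) (hA : A ⊆ blk i) {u : S}
    (hu : u ∈ blk i \ A) : (#(occupied blk M (insert u A)) : ℝ) ≤ θ * #(occupied blk M A) := by
  have sdiff_card_pos : (0 : ℝ) < #(blk i \ A) := by exact_mod_cast card_pos.2 ⟨u, hu⟩
  have remaining_le : ((M i - #A : ℕ) : ℝ) ≤ θ * #(blk i \ A) := by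
    rw [cast_card_sdiff hA]
    rcases le_total (#A) (M i) with h | h
    · rw [Nat.cast_sub h]
      linarith [mul_le_of_le_one_left (#A).cast_nonneg hθ1]
    · rw [Nat.sub_eq_zero_of_le h, Nat.cast_zero]
      exact mul_nonneg hθ0 (sub_nonneg.2 (by exact_mod_cast card_le_card hA))
  refine le_of_mul_le_mul_left ?_ sdiff_card_pos
  calc (#(blk i \ A) : ℝ) * #(occupied blk M (insert u A))
      = (M i - #A : ℕ) * #(occupied blk M A) := by
        exact_mod_cast card_sdiff_mul_card_occupied_insert hdisj hA hu
    _ ≤ θ * #(blk i \ A) * #(occupied blk M A) := by gcongr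
    _ = _ := by ring

theorem occupied_singleton (x : S) : occupied blk M {x} = sector blk M x := by
  ext η
  simp [mem_occupied, mem_sector]

theorem card_sector_filter_le (hdisj : Pairwise (Function.onFun Disjoint blk)) {θ : ℝ}
    (hθ0 : 0 ≤ θ) (hθ1 : θ ≤ 1) (hM : (M i : ℝ) ≤ θ * #(blk i)) {x : S} (hx : x ∈ blk i)
    (hA : A ⊆ (blk i).erase x) :
    (#{η ∈ sector blk M x | ∀ a ∈ A, η a = true} : ℝ) ≤ θ ^ #A * #(sector blk M x) := by
  have filter_eq : ({η ∈ sector blk M x | ∀ a ∈ A, η a = true} : Finset _) =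
      occupied blk M (insert x A) := by
    ext η
    simp only [mem_filter, mem_sector, mem_occupied, forall_mem_insert]
    tauto
  rw [filter_eq, ← occupied_singleton]
  clear filter_eq
  induction A using Finset.induction_on with
  | empty => simp
  | insert u A hu ih =>
    rw [insert_subset_iff] at hA
    have hsub : insert x A ⊆ blk i := insert_subset hx (hA.2.trans (erase_subset _ _))
    have hu_sdiff : u ∈ blk i \ insert x A := by
      simp [mem_of_mem_erase hA.1, ne_of_mem_erase hA.1, hu]
    rw [insert_comm, card_insert_of_notMem hu, pow_succ']
    calc (#(occupied blk M (insert u (insert x A))) : ℝ)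
        ≤ θ * #(occupied blk M (insert x A)) :=
          card_occupied_insert_le hdisj hθ0 hθ1 hM hsub hu_sdiff
      _ ≤ θ * (θ ^ #A * #(occupied blk M {x})) := by gcongr; exact ih hA.2
      _ = _ := by ring

end Occupied

section FixedTag

variable {S ι : Type*} [Fintype S] [DecidableEq S]

/-- The Dirichlet form, in a sector with tag `x`, of the exchanges along the edges of the site graph
which lie in `blk j` and avoid the tag. -/
def fixedTagEnergy (adj : S → S → Prop) (blk : ι → Finset S) (M : ι → ℕ)
    (F : (S → Bool) → ℝ) (x : S) (j : ι) : ℝ :=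
  ∑ s ∈ (blk j).erase x, ∑ t ∈ (blk j).erase x with adj s t, swapEnergy (sector blk M x) F s t

variable {adj : S → S → Prop} {blk : ι → Finset S} {M : ι → ℕ}

theorem fixedTagEnergy_nonneg (M : ι → ℕ) (F : (S → Bool) → ℝ) (x : S) (j : ι) :
    0 ≤ fixedTagEnergy adj blk M F x j :=
  sum_nonneg fun _ _ => sum_nonneg fun _ _ => swapEnergy_nonneg _ _ _ _

theorem swapEnergy_le_fixedTagEnergy (F : (S → Bool) → ℝ) {x s t : S} {j : ι}
    (hs : s ∈ (blk j).erase x) (ht : t ∈ (blk j).erase x) (hst : adj s t) :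
    swapEnergy (sector blk M x) F s t ≤ fixedTagEnergy adj blk M F x j :=
  calc swapEnergy (sector blk M x) F s t
      ≤ ∑ t ∈ (blk j).erase x with adj s t, swapEnergy (sector blk M x) F s t :=
        single_le_sum (f := swapEnergy (sector blk M x) F s)
          (fun _ _ => swapEnergy_nonneg _ _ _ _) (mem_filter.2 ⟨ht, hst⟩)
    _ ≤ fixedTagEnergy adj blk M F x j :=
        single_le_sum (f := fun s => ∑ t ∈ (blk j).erase x with adj s t,
          swapEnergy (sector blk M x) F s t)
          (fun _ _ => sum_nonneg fun _ _ => swapEnergy_nonneg _ _ _ _) hs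

end FixedTag

section GridPartition

/-- A partition of the sites into blocks, each charted by a grid whose edges are edges of the site
graph `adj`. -/
structure IsGridPartition {S ι : Type*} {d N : ℕ} (adj : S → S → Prop) (blk : ι → Finset S)
    (φ : ι → Grid d N → S) : Prop where
  mem_blk_iff : ∀ i s, s ∈ blk i ↔ ∃ u, φ i u = s
  injective : ∀ i, Function.Injective (φ i)
  adj : ∀ i u v, Grid.Adj u v → adj (φ i u) (φ i v)
  disjoint : Pairwise (Function.onFun Disjoint blk)
  cover : ∀ s, ∃ i, s ∈ blk i

namespace IsGridPartition

variable {S ι : Type*} {d N : ℕ} {adj : S → S → Prop} {blk : ι → Finset S}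
  {φ : ι → Grid d N → S}

theorem apply_mem (h : IsGridPartition adj blk φ) (i : ι) (u : Grid d N) : φ i u ∈ blk i :=
  (h.mem_blk_iff i _).2 ⟨u, rfl⟩

theorem sum_filter_blk (h : IsGridPartition adj blk φ) (i : ι) (P : S → Prop) [DecidablePred P]
    [DecidablePred fun u => P (φ i u)] (g : S → ℝ) :
    ∑ s ∈ blk i with P s, g s = ∑ u with P (φ i u), g (φ i u) := by
  refine (sum_nbij (φ i) (fun u hu => ?_) (h.injective i).injOn (fun s hs => ?_)
    fun _ _ => rfl).symm
  · exact mem_filter.2 ⟨h.apply_mem i u, (mem_filter.1 hu).2⟩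
  · obtain ⟨hs, hP⟩ := mem_filter.1 hs
    obtain ⟨u, rfl⟩ := (h.mem_blk_iff i s).1 hs
    exact ⟨u, by simpa using hP, rfl⟩

theorem sum_blk (h : IsGridPartition adj blk φ) (i : ι) (g : S → ℝ) :
    ∑ s ∈ blk i, g s = ∑ u, g (φ i u) := by
  simpa using h.sum_filter_blk i (fun _ => True) g

theorem card_blk (h : IsGridPartition adj blk φ) (i : ι) :
    #(blk i) = Fintype.card (Grid d N) := by
  rw [← card_univ, ← card_image_of_injective univ (h.injective i)]
  congr 1
  ext s
  simp [h.mem_blk_iff]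

variable [DecidableEq S]

theorem apply_mem_erase (h : IsGridPartition adj blk φ) (i : ι) {s u : Grid d N} (hs : s ≠ u) :
    φ i s ∈ (blk i).erase (φ i u) :=
  mem_erase.2 ⟨(h.injective i).ne hs, h.apply_mem i s⟩

theorem card_grid_le_two_mul_card_erase (h : IsGridPartition adj blk φ) (hd : d ≠ 0) (hN : 1 ≤ N)
    (i : ι) (x : S) : Fintype.card (Grid d N) ≤ 2 * #((blk i).erase x) := by
  have := Grid.two_le_card (d := d) (N := N) hd hN
  have := h.card_blk i
  have := pred_card_le_card_erase (s := blk i) (a := x)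
  omega

theorem sum_erase (h : IsGridPartition adj blk φ) (i : ι) (x : S) (g : S → ℝ) :
    ∑ s ∈ (blk i).erase x, g s = ∑ u with φ i u ≠ x, g (φ i u) := by
  rw [← filter_ne', h.sum_filter_blk]

theorem edgeEnergy_chart_le (h : IsGridPartition adj blk φ) (i : ι) (x : S) (q : S → S → ℝ) :
    Grid.edgeEnergy (fun u v => q (φ i u) (φ i v)) (φ i · ≠ x) ≤
      ∑ s ∈ (blk i).erase x, ∑ t ∈ (blk i).erase x with adj s t, q s t ^ 2 := by
  rw [h.sum_erase, Grid.edgeEnergy]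
  refine (sum_le_sum fun u _ => ?_).trans_eq (by congr!)
  rw [← filter_ne', filter_filter]
  refine (sum_le_sum_of_subset_of_nonneg (fun v hv => ?_) fun _ _ _ => sq_nonneg _).trans_eq
    (h.sum_filter_blk i (fun t => t ≠ x ∧ adj (φ i u) t) fun t => q (φ i u) t ^ 2).symm
  simp only [mem_filter, mem_univ, true_and] at hv ⊢
  exact ⟨hv.1, h.adj i u v hv.2⟩

theorem sum_sq_cost_erase_le (h : IsGridPartition adj blk φ) (hd : 2 ≤ d) (hN : 1 ≤ N) (i : ι)
    (x : S) {q : S → S → ℝ} (hq : IsSwapCost q) :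
    ∑ s ∈ (blk i).erase x, ∑ t ∈ (blk i).erase x, q s t ^ 2 ≤
      5216 * d ^ 2 * (N + 1) ^ 2 * #((blk i).erase x) *
        ∑ s ∈ (blk i).erase x, ∑ t ∈ (blk i).erase x with adj s t, q s t ^ 2 := by
  have preimage_subsingleton : {u | ¬φ i u ≠ x}.Subsingleton := fun u hu v hv =>
    h.injective i ((not_not.1 hu).trans (not_not.1 hv).symm)
  have card_le : (Fintype.card (Grid d N) : ℝ) ≤ 2 * #((blk i).erase x) := by
    exact_mod_cast h.card_grid_le_two_mul_card_erase (by omega) hN i x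
  calc ∑ s ∈ (blk i).erase x, ∑ t ∈ (blk i).erase x, q s t ^ 2
      = ∑ u with φ i u ≠ x, ∑ v with φ i v ≠ x, q (φ i u) (φ i v) ^ 2 := by simp only [h.sum_erase]
    _ ≤ 2608 * d ^ 2 * (N + 1) ^ 2 * Fintype.card (Grid d N) *
          Grid.edgeEnergy (fun u v => q (φ i u) (φ i v)) (φ i · ≠ x) := by
        convert Grid.sum_sq_cost_filter_le (hq.comp (φ i)) hd hN preimage_subsingleton
    _ ≤ 2608 * d ^ 2 * (N + 1) ^ 2 * (2 * #((blk i).erase x)) *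
          ∑ s ∈ (blk i).erase x, ∑ t ∈ (blk i).erase x with adj s t, q s t ^ 2 := by
        gcongr
        · exact Grid.edgeEnergy_nonneg _ _
        · exact h.edgeEnergy_chart_le i x q
    _ = _ := by ring

variable [Fintype S]

theorem exists_sum_sector_sub_sq_le [Fintype ι] (h : IsGridPartition adj blk φ) (hd : 2 ≤ d)
    (hN : 1 ≤ N) (M : ι → ℕ) (F : (S → Bool) → ℝ) (x : S) :
    ∃ c, ∑ η ∈ sector blk M x, (F η - c) ^ 2 ≤
      5216 * d ^ 2 * (N + 1) ^ 2 * ∑ j, fixedTagEnergy adj blk M F x j := by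
  obtain ⟨q, hq, q_sq⟩ := exists_isSwapCost_sq_eq_swapEnergy h.disjoint M x F
  obtain ⟨c, hc⟩ := exists_sum_sector_sub_sq_le_sum_swapEnergy h.disjoint h.cover M x F
  refine ⟨c, hc.trans ?_⟩
  rw [mul_sum]
  refine sum_le_sum fun j _ => ?_
  have card_pos : (0 : ℝ) < #((blk j).erase x) := by
    have := h.card_grid_le_two_mul_card_erase (by omega) hN j x
    have := Grid.two_le_card (d := d) (by omega) hN
    exact_mod_cast (by omega)
  have poincare := h.sum_sq_cost_erase_le hd hN j x hq
  have pair_sum_eq : ∑ s ∈ (blk j).erase x, ∑ t ∈ (blk j).erase x, q s t ^ 2 =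
      ∑ s ∈ (blk j).erase x, ∑ t ∈ (blk j).erase x, swapEnergy (sector blk M x) F s t :=
    sum_congr rfl fun s hs => sum_congr rfl (q_sq j s hs)
  have edge_sum_eq : ∑ s ∈ (blk j).erase x, ∑ t ∈ (blk j).erase x with adj s t, q s t ^ 2 =
      fixedTagEnergy adj blk M F x j :=
    sum_congr rfl fun s hs => sum_congr rfl fun t ht => q_sq j s hs t (mem_filter.1 ht).1
  rw [pair_sum_eq, edge_sum_eq] at poincare
  rw [inv_mul_le_iff₀ card_pos]
  exact poincare.trans_eq (by ring)

end IsGridPartition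
end GridPartition

section TagMove

theorem abs_sum_le_sqrt_card_mul_sqrt {α : Type*} {A : Finset α} {g : α → ℝ} {Q : ℝ}
    (hQ : ∑ a ∈ A, g a ^ 2 ≤ Q) : |∑ a ∈ A, g a| ≤ √(#A) * √Q := by
  rw [← Real.sqrt_mul (#A).cast_nonneg]
  exact Real.abs_le_sqrt (sq_sum_le_card_mul_sum_sq.trans (by gcongr))

theorem sq_sqrt_add_sqrt_add_sqrt_le {a b c : ℝ} (ha : 0 ≤ a) (hb : 0 ≤ b) (hc : 0 ≤ c) :
    (√a + √b + √c) ^ 2 ≤ 3 * (a + b + c) := by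
  linarith [Real.sq_sqrt ha, Real.sq_sqrt hb, Real.sq_sqrt hc, sq_nonneg (√a - √b),
    sq_nonneg (√a - √c), sq_nonneg (√b - √c)]

theorem exists_apply_eq_false_of_particles_lt {S : Type*} {B : Finset S} {η : S → Bool}
    (h : particles B η < #B) : ∃ y ∈ B, η y = false := by
  by_contra! hfull
  refine h.ne ?_
  rw [particles, filter_true_of_mem fun y hy => by simpa using hfull y hy]

variable {S ι : Type*} [DecidableEq S] {x y z : S}

/-- The hole at `y` is brought to `z`, the tag jumps from `x` to `z`, and the hole it leaves at `x`
is brought back to `y`. -/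
theorem tag_move_eq_add (hxy : x ≠ y) (hyz : y ≠ z) (f : S → (S → Bool) → ℝ)
    (η : S → Bool) : f z (η ∘ Equiv.swap x z) - f x η =
      (f x (η ∘ Equiv.swap z y) - f x η) +
      (f z ((η ∘ Equiv.swap z y) ∘ Equiv.swap x z) - f x (η ∘ Equiv.swap z y)) +
      (f z ((η ∘ ⇑(Equiv.swap z y * Equiv.swap x z)) ∘ Equiv.swap x y) -
        f z (η ∘ ⇑(Equiv.swap z y * Equiv.swap x z))) := by
  have conj : Equiv.swap x z * Equiv.swap x y = Equiv.swap z y * Equiv.swap x z := by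
    rw [Equiv.mul_swap_eq_swap_mul, Equiv.swap_apply_left,
      Equiv.swap_apply_of_ne_of_ne hxy.symm hyz]
  have after_return :
      (η ∘ ⇑(Equiv.swap z y * Equiv.swap x z)) ∘ Equiv.swap x y = η ∘ Equiv.swap x z := by
    rw [← conj, Function.comp_assoc, ← Equiv.Perm.coe_mul, mul_assoc, Equiv.swap_mul_self, mul_one]
  rw [after_return, Function.comp_assoc, ← Equiv.Perm.coe_mul]
  ring

variable [Fintype S] {blk : ι → Finset S} {M : ι → ℕ} {i : ι} {A : Finset (S → Bool)}

/-- The Dirichlet form, in the sector with tag `x`, of the jump of the tag to `z` when that site is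
empty. -/
def tagJumpEnergy (blk : ι → Finset S) (M : ι → ℕ) (f : S → (S → Bool) → ℝ) (x z : S) : ℝ :=
  ∑ η ∈ sector blk M x with η z = false, (f z (η ∘ Equiv.swap x z) - f x η) ^ 2

theorem tagJumpEnergy_nonneg (blk : ι → Finset S) (M : ι → ℕ) (f : S → (S → Bool) → ℝ) (x z : S) :
    0 ≤ tagJumpEnergy blk M f x z :=
  sum_nonneg fun _ _ => sq_nonneg _

theorem sum_sq_tag_jump_comp_le (hdisj : Pairwise (Function.onFun Disjoint blk))
    {τ : Equiv.Perm S} (hτ : τ ∈ permsOn (blk i)) (hx : τ x = x) (f : S → (S → Bool) → ℝ)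
    (hA : A ⊆ sector blk M x) (hole : ∀ η ∈ A, η (τ z) = false) :
    ∑ η ∈ A, (f z ((η ∘ τ) ∘ Equiv.swap x z) - f x (η ∘ τ)) ^ 2 ≤ tagJumpEnergy blk M f x z := by
  set jump : (S → Bool) → ℝ := fun ζ =>
    if ζ z = false then (f z (ζ ∘ Equiv.swap x z) - f x ζ) ^ 2 else 0 with hjump
  have jump_nonneg (ζ : S → Bool) : 0 ≤ jump ζ := by
    rw [hjump]
    positivity
  calc ∑ η ∈ A, (f z ((η ∘ τ) ∘ Equiv.swap x z) - f x (η ∘ τ)) ^ 2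
      = ∑ η ∈ A, jump (η ∘ τ) := sum_congr rfl fun η hη => (if_pos (hole η hη)).symm
    _ ≤ ∑ η ∈ sector blk M x, jump (η ∘ τ) :=
        sum_le_sum_of_subset_of_nonneg hA fun _ _ _ => jump_nonneg _
    _ = tagJumpEnergy blk M f x z := by
        rw [sum_sector_comp hdisj hτ hx, tagJumpEnergy, sum_filter]

theorem abs_sum_tag_move_le_of_hole (hdisj : Pairwise (Function.onFun Disjoint blk))
    (hx : x ∈ blk i) (hy : y ∈ blk i) (hz : z ∈ blk i) (hxy : x ≠ y) (hxz : x ≠ z) (hyz : y ≠ z)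
    (f : S → (S → Bool) → ℝ) (hA : A ⊆ sector blk M x) (hole : ∀ η ∈ A, η y = false) :
    |∑ η ∈ A, (f z (η ∘ Equiv.swap x z) - f x η)| ≤
      √(#A) * (√(swapEnergy (sector blk M x) (f x) z y) + √(tagJumpEnergy blk M f x z) +
        √(swapEnergy (sector blk M z) (f z) x y)) := by
  set σ : Equiv.Perm S := Equiv.swap z y * Equiv.swap x z with hσ
  have σ_mem : σ ∈ permsOn (blk i) := mul_mem (swap_mem_permsOn hz hy) (swap_mem_permsOn hx hz)
  have σ_z : σ z = x := by
    rw [hσ, Equiv.Perm.mul_apply, Equiv.swap_apply_right, Equiv.swap_apply_of_ne_of_ne hxz hxy]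
  have approach_le : ∑ η ∈ A, (f x (η ∘ Equiv.swap z y) - f x η) ^ 2 ≤
      swapEnergy (sector blk M x) (f x) z y :=
    sum_le_sum_of_subset_of_nonneg hA fun _ _ _ => sq_nonneg _
  have jump_le : ∑ η ∈ A, (f z ((η ∘ Equiv.swap z y) ∘ Equiv.swap x z) -
      f x (η ∘ Equiv.swap z y)) ^ 2 ≤ tagJumpEnergy blk M f x z :=
    sum_sq_tag_jump_comp_le hdisj (swap_mem_permsOn hz hy)
      (Equiv.swap_apply_of_ne_of_ne hxz hxy) f hA (by simpa using hole)
  have return_le : ∑ η ∈ A, (f z ((η ∘ σ) ∘ Equiv.swap x y) - f z (η ∘ σ)) ^ 2 ≤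
      swapEnergy (sector blk M z) (f z) x y :=
    (sum_le_sum_of_subset_of_nonneg hA fun _ _ _ => sq_nonneg _).trans_eq
      (sum_sector_comp hdisj σ_mem σ_z M fun ζ => (f z (ζ ∘ Equiv.swap x y) - f z ζ) ^ 2)
  rw [sum_congr rfl fun η _ => tag_move_eq_add hxy hyz f η, sum_add_distrib, sum_add_distrib,
    mul_add, mul_add]
  refine (abs_add_three _ _ _).trans ?_
  gcongr
  exacts [abs_sum_le_sqrt_card_mul_sqrt approach_le, abs_sum_le_sqrt_card_mul_sqrt jump_le,
    abs_sum_le_sqrt_card_mul_sqrt return_le]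

end TagMove

namespace Grid

theorem Adj.ne {d N : ℕ} {s t : Grid d N} (h : Adj s t) : s ≠ t := by
  rintro rfl
  simp [Adj] at h

theorem Adj.supDist_le_supDist_add_one {d N : ℕ} {u v : Grid d N} (h : Adj u v) (w : Grid d N) :
    supDist v w ≤ supDist u w + 1 :=
  supDist_le.2 fun k => by
    have near := supDist_le.1 h.supDist_le_one k
    have far := supDist_le.1 (le_refl (supDist u w)) k
    omega

end Grid

namespace IsGridPartition

variable {S ι : Type*} [Fintype S] [DecidableEq S] {d N : ℕ} {adj : S → S → Prop}
  {blk : ι → Finset S} {φ : ι → Grid d N → S} {M : ι → ℕ} {i : ι} {θ : ℝ}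

theorem sqrt_swapEnergy_sector_le (h : IsGridPartition adj blk φ) (hd : 2 ≤ d) (hN : 1 ≤ N)
    (M : ι → ℕ) (i : ι) {u s t : Grid d N} (hs : s ≠ u) (ht : t ≠ u) (F : (S → Bool) → ℝ) {R : ℕ}
    (hR : Grid.supDist s t ≤ R) :
    √(swapEnergy (sector blk M (φ i u)) F (φ i s) (φ i t)) ≤
      36 * d * R * √(fixedTagEnergy adj blk M F (φ i u) i) := by
  obtain ⟨q, hq, q_sq⟩ := exists_isSwapCost_sq_eq_swapEnergy h.disjoint M (φ i u) F
  have q_eq {s t : Grid d N} (hs : s ≠ u) (ht : t ≠ u) :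
      √(swapEnergy (sector blk M (φ i u)) F (φ i s) (φ i t)) = q (φ i s) (φ i t) := by
    rw [← q_sq i _ (h.apply_mem_erase i hs) _ (h.apply_mem_erase i ht),
      Real.sqrt_sq (hq.nonneg _ _)]
  rw [q_eq hs ht]
  refine Grid.cost_le_of_adj_le (hq.comp (φ i)) hd hN (Real.sqrt_nonneg _)
    (fun s t hs ht hst => ?_) hs ht (Grid.supDist_le.1 hR)
  rw [← q_eq hs ht]
  exact Real.sqrt_le_sqrt <| swapEnergy_le_fixedTagEnergy F (h.apply_mem_erase i hs)
    (h.apply_mem_erase i ht) (h.adj i s t hst)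

theorem abs_sum_tag_move_le (h : IsGridPartition adj blk φ) (hd : 2 ≤ d) (hN : 1 ≤ N)
    {u v w : Grid d N} (huv : Grid.Adj u v) (hwu : w ≠ u) (f : S → (S → Bool) → ℝ)
    {A : Finset (S → Bool)} (hA : A ⊆ sector blk M (φ i u)) (hole : ∀ η ∈ A, η (φ i w) = false) :
    |∑ η ∈ A, (f (φ i v) (η ∘ Equiv.swap (φ i u) (φ i v)) - f (φ i u) η)| ≤
      √(#A) * (36 * d * (Grid.supDist u w + 1) *
        (√(fixedTagEnergy adj blk M (f (φ i u)) (φ i u) i) +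
          √(tagJumpEnergy blk M f (φ i u) (φ i v)) +
          √(fixedTagEnergy adj blk M (f (φ i v)) (φ i v) i))) := by
  have one_le_factor : (1 : ℝ) ≤ 36 * d * (Grid.supDist u w + 1) := by
    exact_mod_cast (show 1 ≤ 36 * d * (Grid.supDist u w + 1) from
      Nat.mul_pos (by omega) (Nat.succ_pos _))
  have jump_le := le_mul_of_one_le_left
    (Real.sqrt_nonneg (tagJumpEnergy blk M f (φ i u) (φ i v))) one_le_factor
  rcases eq_or_ne w v with rfl | hwv
  · have direct := abs_sum_le_sqrt_card_mul_sqrt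
      (sum_sq_tag_jump_comp_le h.disjoint (one_mem (permsOn (blk i))) rfl f hA hole)
    refine direct.trans (mul_le_mul_of_nonneg_left ?_ (Real.sqrt_nonneg _))
    refine jump_le.trans (mul_le_mul_of_nonneg_left ?_ (by positivity))
    exact le_add_of_le_of_nonneg (le_add_of_nonneg_left (Real.sqrt_nonneg _)) (Real.sqrt_nonneg _)
  · refine (abs_sum_tag_move_le_of_hole h.disjoint (h.apply_mem i u) (h.apply_mem i w)
      (h.apply_mem i v) ((h.injective i).ne hwu.symm) ((h.injective i).ne huv.ne)
      ((h.injective i).ne hwv) f hA hole).trans ?_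
    rw [mul_add (36 * (d : ℝ) * _), mul_add (36 * (d : ℝ) * _)]
    gcongr
    · exact_mod_cast h.sqrt_swapEnergy_sector_le hd hN M i huv.ne.symm hwu (f (φ i u))
        (huv.supDist_le_supDist_add_one w)
    · exact_mod_cast h.sqrt_swapEnergy_sector_le hd hN M i huv.ne hwv (f (φ i v))
        (Nat.le_succ (Grid.supDist u w))

theorem exists_nearest_hole (h : IsGridPartition adj blk φ) (hM : M i < #(blk i)) {u : Grid d N}
    {η : S → Bool} (hη : η ∈ sector blk M (φ i u)) :
    ∃ w ≠ u, η (φ i w) = false ∧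
      ∀ w', Grid.supDist u w' < Grid.supDist u w → η (φ i w') = true := by
  rw [mem_sector] at hη
  obtain ⟨y, hy, hole⟩ := exists_apply_eq_false_of_particles_lt ((hη.2 i).trans_lt hM)
  obtain ⟨w₀, rfl⟩ := (h.mem_blk_iff i y).1 hy
  obtain ⟨w, hw, nearest⟩ := exists_min_image {w | η (φ i w) = false} (Grid.supDist u)
    ⟨w₀, by simpa using hole⟩
  simp only [mem_filter, mem_univ, true_and] at hw nearest
  refine ⟨w, ?_, hw, fun w' hlt => ?_⟩
  · rintro rfl
    simp [hη.1] at hw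
  · by_contra hempty
    exact hlt.not_ge (nearest w' (by simpa using hempty))

theorem mul_card_sector_filter_supDist_le (h : IsGridPartition adj blk φ) (hθ0 : 0 ≤ θ)
    (hθ1 : θ ≤ 1) (hM : (M i : ℝ) ≤ θ * #(blk i)) (u w : Grid d N) :
    θ * #{η ∈ sector blk M (φ i u) | ∀ w', Grid.supDist u w' < Grid.supDist u w →
      η (φ i w') = true} ≤ θ ^ Grid.supDist u w * #(sector blk M (φ i u)) := by
  set ball := image (φ i) {w' | Grid.supDist u w' < Grid.supDist u w} with hball
  have ball_subset : ball ⊆ blk i := image_subset_iff.2 fun w' _ => h.apply_mem i w'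
  have dist_le : Grid.supDist u w ≤ #(ball.erase (φ i u)) + 1 :=
    calc Grid.supDist u w ≤ #ball := by
          rw [hball, card_image_of_injective _ (h.injective i)]
          exact Grid.supDist_le_card_supDist_lt u w
      _ ≤ #(ball.erase (φ i u)) + 1 := Nat.sub_le_iff_le_add.1 pred_card_le_card_erase
  calc θ * #{η ∈ sector blk M (φ i u) | ∀ w', Grid.supDist u w' < Grid.supDist u w →
        η (φ i w') = true}
      ≤ θ * #{η ∈ sector blk M (φ i u) | ∀ a ∈ ball.erase (φ i u), η a = true} := by
        gcongr with η
        intro hη a ha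
        obtain ⟨w', hw', rfl⟩ := mem_image.1 (mem_of_mem_erase ha)
        exact hη w' (mem_filter.1 hw').2
    _ ≤ θ * (θ ^ #(ball.erase (φ i u)) * #(sector blk M (φ i u))) := by
        gcongr
        exact card_sector_filter_le h.disjoint hθ0 hθ1 hM (h.apply_mem i u)
          (erase_subset_erase _ ball_subset)
    _ = θ ^ (#(ball.erase (φ i u)) + 1) * #(sector blk M (φ i u)) := by ring
    _ ≤ θ ^ Grid.supDist u w * #(sector blk M (φ i u)) := by
        gcongr ?_ * _
        exact pow_le_pow_of_le_one hθ0 hθ1 dist_le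

theorem abs_sum_tag_move_nearest_hole_le (h : IsGridPartition adj blk φ) (hd : 2 ≤ d) (hN : 1 ≤ N)
    (hθ0 : 0 < θ) (hθ1 : θ ≤ 1) (hM : (M i : ℝ) ≤ θ * #(blk i)) {u v w : Grid d N}
    (huv : Grid.Adj u v) (hwu : w ≠ u) (f : S → (S → Bool) → ℝ) {A : Finset (S → Bool)}
    (hA : ∀ η ∈ A, η ∈ sector blk M (φ i u) ∧ η (φ i w) = false ∧
      ∀ w', Grid.supDist u w' < Grid.supDist u w → η (φ i w') = true) :
    |∑ η ∈ A, (f (φ i v) (η ∘ Equiv.swap (φ i u) (φ i v)) - f (φ i u) η)| ≤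
      √(#(sector blk M (φ i u)) / θ) * (36 * d) *
        (√(fixedTagEnergy adj blk M (f (φ i u)) (φ i u) i) +
          √(tagJumpEnergy blk M f (φ i u) (φ i v)) +
          √(fixedTagEnergy adj blk M (f (φ i v)) (φ i v) i)) *
        ((Grid.supDist u w + 1) * √θ ^ Grid.supDist u w) := by
  have card_le : (#A : ℝ) ≤ #(sector blk M (φ i u)) / θ * θ ^ Grid.supDist u w := by
    rw [div_mul_eq_mul_div, le_div_iff₀' hθ0, mul_comm (#(sector blk M (φ i u)) : ℝ)]
    refine le_trans ?_ (h.mul_card_sector_filter_supDist_le hθ0.le hθ1 hM u w)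
    gcongr
    exact fun η hη => mem_filter.2 ⟨(hA η hη).1, (hA η hη).2.2⟩
  have sqrt_card_le : √(#A) ≤ √(#(sector blk M (φ i u)) / θ) * √θ ^ Grid.supDist u w := by
    refine Real.sqrt_le_iff.2 ⟨by positivity, card_le.trans_eq ?_⟩
    rw [mul_pow, pow_right_comm, Real.sq_sqrt (by positivity), Real.sq_sqrt hθ0.le]
  refine (h.abs_sum_tag_move_le hd hN huv hwu f (fun η hη => (hA η hη).1)
    fun η hη => (hA η hη).2.1).trans ?_
  refine (mul_le_mul_of_nonneg_right sqrt_card_le (by positivity)).trans_eq ?_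
  ring

theorem abs_sum_sector_tag_move_le (h : IsGridPartition adj blk φ) (hd : 2 ≤ d) (hN : 1 ≤ N)
    (hθ0 : 0 < θ) (hθ1 : θ < 1) (hM : (M i : ℝ) ≤ θ * #(blk i)) {u v : Grid d N}
    (huv : Grid.Adj u v) (f : S → (S → Bool) → ℝ) :
    |∑ η ∈ sector blk M (φ i u), (f (φ i v) (η ∘ Equiv.swap (φ i u) (φ i v)) - f (φ i u) η)| ≤
      √(#(sector blk M (φ i u)) / θ) * (36 * d) *
        (√(fixedTagEnergy adj blk M (f (φ i u)) (φ i u) i) +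
          √(tagJumpEnergy blk M f (φ i u) (φ i v)) +
          √(fixedTagEnergy adj blk M (f (φ i v)) (φ i v) i)) * Grid.shellSeries d √θ := by
  have count_lt : M i < #(blk i) := by
    have := card_pos.2 ⟨_, h.apply_mem i u⟩
    exact_mod_cast hM.trans_lt (mul_lt_of_lt_one_left (by positivity) hθ1)
  have exists_hole (η : S → Bool) : ∃ w, η ∈ sector blk M (φ i u) → w ≠ u ∧ η (φ i w) = false ∧
      ∀ w', Grid.supDist u w' < Grid.supDist u w → η (φ i w') = true := by
    by_cases hη : η ∈ sector blk M (φ i u)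
    · exact (h.exists_nearest_hole count_lt hη).imp fun w hw _ => hw
    · exact ⟨u, fun h => absurd h hη⟩
  choose hole hole_spec using exists_hole
  rw [← sum_fiberwise _ hole]
  refine (abs_sum_le_sum_abs _ _).trans <| (sum_le_sum fun w _ => ?_).trans <|
    (mul_sum _ _ _).symm.trans_le <| mul_le_mul_of_nonneg_left
      (Grid.sum_supDist_mul_pow_le (Real.sqrt_nonneg θ)
        (Real.sqrt_lt_sqrt hθ0.le hθ1 |>.trans_eq Real.sqrt_one) u) (by positivity)
  have fiber_spec (η : S → Bool) (hη : η ∈ {η ∈ sector blk M (φ i u) | hole η = w}) :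
      η ∈ sector blk M (φ i u) ∧ w ≠ u ∧ η (φ i w) = false ∧
        ∀ w', Grid.supDist u w' < Grid.supDist u w → η (φ i w') = true := by
    obtain ⟨mem, rfl⟩ := mem_filter.1 hη
    exact ⟨mem, hole_spec η mem⟩
  rcases eq_or_ne w u with rfl | hwu
  · rw [filter_eq_empty_iff.2 fun η hη hw => ?_]
    · simp only [sum_empty, abs_zero]
      positivity
    · exact (fiber_spec η (mem_filter.2 ⟨hη, hw⟩)).2.1 rfl
  · exact h.abs_sum_tag_move_nearest_hole_le hd hN hθ0 hθ1.le hM huv hwu f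
      fun η hη => ⟨(fiber_spec η hη).1, (fiber_spec η hη).2.2⟩

theorem sq_sum_sector_tag_move_le (h : IsGridPartition adj blk φ) (hd : 2 ≤ d) (hN : 1 ≤ N)
    (hθ0 : 0 < θ) (hθ1 : θ < 1) (hM : (M i : ℝ) ≤ θ * #(blk i)) {u v : Grid d N}
    (huv : Grid.Adj u v) (f : S → (S → Bool) → ℝ) :
    (∑ η ∈ sector blk M (φ i u),
      (f (φ i v) (η ∘ Equiv.swap (φ i u) (φ i v)) - f (φ i u) η)) ^ 2 ≤
      #(sector blk M (φ i u)) * (3 * (36 * d * Grid.shellSeries d √θ) ^ 2 / θ *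
        (fixedTagEnergy adj blk M (f (φ i u)) (φ i u) i + tagJumpEnergy blk M f (φ i u) (φ i v) +
          fixedTagEnergy adj blk M (f (φ i v)) (φ i v) i)) := by
  set E := fixedTagEnergy adj blk M (f (φ i u)) (φ i u) i
  set J := tagJumpEnergy blk M f (φ i u) (φ i v)
  set E' := fixedTagEnergy adj blk M (f (φ i v)) (φ i v) i
  set K : ℝ := (#(sector blk M (φ i u)) : ℝ)
  have cauchy_schwarz : (√E + √J + √E') ^ 2 ≤ 3 * (E + J + E') :=
    sq_sqrt_add_sqrt_add_sqrt_le (fixedTagEnergy_nonneg _ _ _ _) (tagJumpEnergy_nonneg _ _ _ _ _)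
      (fixedTagEnergy_nonneg _ _ _ _)
  rw [← sq_abs]
  calc |∑ η ∈ sector blk M (φ i u),
          (f (φ i v) (η ∘ Equiv.swap (φ i u) (φ i v)) - f (φ i u) η)| ^ 2
      ≤ (√(K / θ) * (36 * d) * (√E + √J + √E') * Grid.shellSeries d √θ) ^ 2 :=
        pow_le_pow_left₀ (abs_nonneg _) (h.abs_sum_sector_tag_move_le hd hN hθ0 hθ1 hM huv f) 2
    _ = K / θ * (36 * d * Grid.shellSeries d √θ) ^ 2 * (√E + √J + √E') ^ 2 := by
        rw [mul_pow, mul_pow, mul_pow, Real.sq_sqrt (by positivity)]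
        ring
    _ ≤ K / θ * (36 * d * Grid.shellSeries d √θ) ^ 2 * (3 * (E + J + E')) := by
        gcongr
    _ = _ := by ring

end IsGridPartition

section Variance

open scoped BigOperators

variable {α : Type*}

theorem sum_sub_sq_eq_add (A : Finset α) (g : α → ℝ) (c : ℝ) :
    ∑ a ∈ A, (g a - c) ^ 2 =
      ∑ a ∈ A, (g a - 𝔼 b ∈ A, g b) ^ 2 + #A * (𝔼 b ∈ A, g b - c) ^ 2 := by
  have centered : ∑ a ∈ A, (g a - 𝔼 b ∈ A, g b) = 0 := by
    rw [sum_sub_distrib, sum_const, card_smul_expect, sub_self]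
  calc ∑ a ∈ A, (g a - c) ^ 2
      = ∑ a ∈ A, ((g a - 𝔼 b ∈ A, g b) ^ 2 + 2 * (𝔼 b ∈ A, g b - c) * (g a - 𝔼 b ∈ A, g b) +
          (𝔼 b ∈ A, g b - c) ^ 2) := sum_congr rfl fun a _ => by ring
    _ = _ := by
      rw [sum_add_distrib, sum_add_distrib, ← mul_sum, centered, sum_const, nsmul_eq_mul,
        mul_zero, add_zero]

theorem sum_sub_expect_sq_le (A : Finset α) (g : α → ℝ) (c : ℝ) :
    ∑ a ∈ A, (g a - 𝔼 b ∈ A, g b) ^ 2 ≤ ∑ a ∈ A, (g a - c) ^ 2 := by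
  rw [sum_sub_sq_eq_add A g c]
  exact le_add_of_nonneg_right (by positivity)

theorem sum_sum_sub_sq_eq (A : Finset α) (g : α → ℝ) :
    ∑ a ∈ A, ∑ b ∈ A, (g a - g b) ^ 2 = 2 * #A * ∑ a ∈ A, (g a - 𝔼 b ∈ A, g b) ^ 2 := by
  calc ∑ a ∈ A, ∑ b ∈ A, (g a - g b) ^ 2
      = ∑ a ∈ A, (∑ b ∈ A, (g b - 𝔼 c ∈ A, g c) ^ 2 + #A * (g a - 𝔼 c ∈ A, g c) ^ 2) :=
        sum_congr rfl fun a _ => by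
          rw [sub_sq_comm (g a) (𝔼 c ∈ A, g c), ← sum_sub_sq_eq_add]
          exact sum_congr rfl fun b _ => sub_sq_comm _ _
    _ = _ := by
        rw [sum_add_distrib, ← mul_sum, sum_const, nsmul_eq_mul]
        ring

theorem expect_sigma_of_card_eq {β : α → Type*} {A : Finset α} {B : ∀ a, Finset (β a)} {n : ℕ}
    (hB : ∀ a ∈ A, #(B a) = n) (g : ∀ a, β a → ℝ) :
    𝔼 x ∈ A.sigma B, g x.1 x.2 = 𝔼 a ∈ A, 𝔼 b ∈ B a, g a b := by
  rw [expect_eq_sum_div_card, card_sigma, sum_congr rfl hB, sum_sigma, expect_eq_sum_div_card,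
    sum_const, smul_eq_mul, Nat.cast_mul, mul_comm, ← div_div, sum_div]
  congr 1
  exact sum_congr rfl fun a ha => by rw [expect_eq_sum_div_card, hB a ha]

end Variance

section Exchange

variable {S ι : Type*} [DecidableEq S]

/-- The squared increment of `f` under the exchange of the occupations of `y` and `z`, counted only
when these occupations differ. The tag at `x` is carried along by the exchange. -/
def exchangeSq (f : S → (S → Bool) → ℝ) (x : S) (η : S → Bool) (y z : S) : ℝ :=
  (if η y ≠ η z then 1 else 0) * (f (Equiv.swap y z x) (η ∘ Equiv.swap y z) - f x η) ^ 2

/-- The carré du champ at `(x, η)` of the exchanges along the edges of the site graph: the sum of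
`exchangeSq` over the ordered pairs of adjacent sites. -/
def exchangeForm [Fintype S] (adj : S → S → Prop) (f : S → (S → Bool) → ℝ) (x : S)
    (η : S → Bool) : ℝ :=
  ∑ y, ∑ z with adj y z, exchangeSq f x η y z

theorem exchangeSq_nonneg (f : S → (S → Bool) → ℝ) (x : S) (η : S → Bool) (y z : S) :
    0 ≤ exchangeSq f x η y z := by
  unfold exchangeSq
  positivity

theorem comp_swap_of_eq {η : S → Bool} {s t : S} (hst : η s = η t) : η ∘ Equiv.swap s t = η := by
  rw [Equiv.comp_swap_eq_update, hst, Function.update_eq_self, ← hst, Function.update_eq_self]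

theorem swapEnergy_eq_sum_exchangeSq (A : Finset (S → Bool)) (f : S → (S → Bool) → ℝ) {x s t : S}
    (hs : x ≠ s) (ht : x ≠ t) : swapEnergy A (f x) s t = ∑ η ∈ A, exchangeSq f x η s t := by
  refine sum_congr rfl fun η _ => ?_
  rw [exchangeSq, Equiv.swap_apply_of_ne_of_ne hs ht]
  by_cases hη : η s = η t
  · simp [comp_swap_of_eq hη]
  · rw [if_pos hη, one_mul]

variable [Fintype S] {adj : S → S → Prop} {blk : ι → Finset S} {M : ι → ℕ}

theorem exchangeForm_nonneg (f : S → (S → Bool) → ℝ) (x : S) (η : S → Bool) :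
    0 ≤ exchangeForm adj f x η :=
  sum_nonneg fun _ _ => sum_nonneg fun _ _ => exchangeSq_nonneg _ _ _ _ _

theorem sum_exchangeForm (A : Finset (S → Bool)) (f : S → (S → Bool) → ℝ) (x : S) :
    ∑ η ∈ A, exchangeForm adj f x η =
      ∑ y, ∑ z with adj y z, ∑ η ∈ A, exchangeSq f x η y z := by
  unfold exchangeForm
  rw [sum_comm]
  exact sum_congr rfl fun y _ => sum_comm

theorem tagJumpEnergy_eq_sum_exchangeSq (f : S → (S → Bool) → ℝ) (x z : S) :
    tagJumpEnergy blk M f x z = ∑ η ∈ sector blk M x, exchangeSq f x η x z := by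
  rw [tagJumpEnergy, sum_filter]
  refine sum_congr rfl fun η hη => ?_
  have occupied_tag : η x = true := (mem_sector.1 hη).1
  simp [exchangeSq, occupied_tag]

end Exchange

namespace IsGridPartition

variable {S ι : Type*} {d N : ℕ} {adj : S → S → Prop} {blk : ι → Finset S} {φ : ι → Grid d N → S}

theorem sum_sum_blk [Fintype S] [Fintype ι] (h : IsGridPartition adj blk φ) (g : S → ℝ) :
    ∑ i, ∑ x ∈ blk i, g x = ∑ x, g x := by
  rw [← sum_biUnion fun i _ j _ hij => h.disjoint hij]
  congr 1
  ext x
  simpa using h.cover x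

variable [Fintype S] [DecidableEq S]

theorem sum_fixedTagEnergy_add_sum_tagJumpEnergy_le [Fintype ι] (h : IsGridPartition adj blk φ)
    (M : ι → ℕ) (f : S → (S → Bool) → ℝ) (x : S) (B : Finset S) :
    ∑ j, fixedTagEnergy adj blk M (f x) x j + ∑ z ∈ B with adj x z, tagJumpEnergy blk M f x z ≤
      ∑ η ∈ sector blk M x, exchangeForm adj f x η := by
  set e : S → S → ℝ := fun s t => ∑ η ∈ sector blk M x, exchangeSq f x η s t
  have e_nonneg (s t : S) : 0 ≤ e s t := sum_nonneg fun _ _ => exchangeSq_nonneg _ _ _ _ _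
  have fixedTag_le (j : ι) : fixedTagEnergy adj blk M (f x) x j ≤
      ∑ s ∈ blk j, if s ≠ x then ∑ t with adj s t, e s t else 0 := by
    rw [← sum_filter, filter_ne']
    refine sum_le_sum fun s hs => ?_
    calc ∑ t ∈ (blk j).erase x with adj s t, swapEnergy (sector blk M x) (f x) s t
        = ∑ t ∈ (blk j).erase x with adj s t, e s t :=
          sum_congr rfl fun t ht => swapEnergy_eq_sum_exchangeSq _ f (ne_of_mem_erase hs).symm
            (ne_of_mem_erase (mem_filter.1 ht).1).symm
      _ ≤ ∑ t with adj s t, e s t := sum_le_sum_of_subset_of_nonneg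
          (filter_subset_filter _ (subset_univ _)) fun t _ _ => e_nonneg s t
  have tagJump_le : ∑ z ∈ B with adj x z, tagJumpEnergy blk M f x z ≤ ∑ z with adj x z, e x z := by
    simp only [tagJumpEnergy_eq_sum_exchangeSq]
    exact sum_le_sum_of_subset_of_nonneg (filter_subset_filter _ (subset_univ _))
      fun t _ _ => e_nonneg x t
  calc ∑ j, fixedTagEnergy adj blk M (f x) x j + ∑ z ∈ B with adj x z, tagJumpEnergy blk M f x z
      ≤ ∑ j, ∑ s ∈ blk j, (if s ≠ x then ∑ t with adj s t, e s t else 0) +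
          ∑ z with adj x z, e x z := add_le_add (sum_le_sum fun j _ => fixedTag_le j) tagJump_le
    _ = ∑ s, ∑ t with adj s t, e s t := by
        rw [h.sum_sum_blk, ← sum_filter, filter_ne', sum_erase_add _ _ (mem_univ x)]
    _ = _ := (sum_exchangeForm _ f x).symm

theorem card_sector_eq (h : IsGridPartition adj blk φ) (M : ι → ℕ) {i : ι} {x z : S}
    (hx : x ∈ blk i) (hz : z ∈ blk i) : #(sector blk M x) = #(sector blk M z) := by
  have := sum_sector_comp h.disjoint (swap_mem_permsOn hx hz) (Equiv.swap_apply_right x z) M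
    fun _ => (1 : ℝ)
  simpa using this

end IsGridPartition

namespace Grid

variable {d N : ℕ} {g : Grid d N → ℝ}

theorem sum_sum_adj_left_le (hg : ∀ u, 0 ≤ g u) :
    ∑ u, ∑ v with Adj u v, g u ≤ 3 ^ d * ∑ u, g u := by
  rw [mul_sum]
  refine sum_le_sum fun u _ => ?_
  rw [sum_const, nsmul_eq_mul]
  gcongr
  · exact hg u
  · exact_mod_cast card_adj_le u

theorem sum_sum_adj_right_le (hg : ∀ u, 0 ≤ g u) :
    ∑ u, ∑ v with Adj u v, g v ≤ 3 ^ d * ∑ u, g u := by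
  refine (sum_comm' fun u v => ?_).trans_le (sum_sum_adj_left_le hg)
  simp only [Adj, mem_univ, mem_filter, true_and, and_true, sub_sq_comm]

end Grid

section BlockVariance

open scoped BigOperators

/-- The loss in comparing the mean of a function over a sector with its mean after the tag has been
moved to an adjacent site, for blocks of density at most `θ`. -/
def tagMoveConst (d : ℕ) (θ : ℝ) : ℝ := 3 * (36 * d * Grid.shellSeries d √θ) ^ 2 / θ

/-- The constant in the spectral gap estimate for a block of density at most `θ`: the first term
comes from the exchanges which avoid the tag, the second one from the moves of the tag. -/
def blockGapConst (d : ℕ) (θ : ℝ) : ℝ := 5216 * d ^ 2 + 16 * 3 ^ d * d ^ 2 * tagMoveConst d θ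

theorem tagMoveConst_nonneg (d : ℕ) {θ : ℝ} (hθ : 0 ≤ θ) : 0 ≤ tagMoveConst d θ := by
  unfold tagMoveConst
  positivity

theorem blockGapConst_nonneg (d : ℕ) {θ : ℝ} (hθ : 0 ≤ θ) : 0 ≤ blockGapConst d θ := by
  have := tagMoveConst_nonneg d hθ
  unfold blockGapConst
  positivity

/-- The average of `f` over the tagged configurations whose tag lies in `blk i` and which have
`M j` particles in each block `blk j`. -/
def sectorAvg {S ι : Type*} [Fintype S] [DecidableEq S] (blk : ι → Finset S) (i : ι)
    (M : ι → ℕ) (f : S → (S → Bool) → ℝ) : ℝ :=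
  𝔼 x ∈ blk i, 𝔼 η ∈ sector blk M x, f x η

namespace IsGridPartition

variable {S ι : Type*} {d N : ℕ} {adj : S → S → Prop} {blk : ι → Finset S} {φ : ι → Grid d N → S}

theorem sum_sub_expect_blk_sq_le (h : IsGridPartition adj blk φ) (i : ι) (m : S → ℝ) :
    ∑ x ∈ blk i, (m x - 𝔼 y ∈ blk i, m y) ^ 2 ≤
      8 * d ^ 2 * (N + 1) ^ 2 * ∑ u, ∑ v with Grid.Adj u v, (m (φ i u) - m (φ i v)) ^ 2 := by
  have poincare := Grid.sum_sq_cost_le ((isSwapCost_abs_sub m).comp (φ i))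
  have pair_sum_eq : ∑ u, ∑ v, (m (φ i u) - m (φ i v)) ^ 2 =
      2 * #(blk i) * ∑ x ∈ blk i, (m x - 𝔼 y ∈ blk i, m y) ^ 2 := by
    rw [← sum_sum_sub_sq_eq]
    simp only [h.sum_blk]
  have card_pos : (0 : ℝ) < #(blk i) := by
    exact_mod_cast card_pos.2 ⟨_, h.apply_mem i 0⟩
  simp only [sq_abs, Grid.edgeEnergy, true_and, filter_true, pair_sum_eq, ← h.card_blk i]
    at poincare
  refine le_of_mul_le_mul_left (poincare.trans_eq ?_) (mul_pos two_pos card_pos)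
  ring

variable [Fintype S] [DecidableEq S] {M : ι → ℕ} {i : ι} {θ : ℝ}

theorem card_mul_sq_expect_sector_sub_le (h : IsGridPartition adj blk φ) (hd : 2 ≤ d) (hN : 1 ≤ N)
    (hθ0 : 0 < θ) (hθ1 : θ < 1) (hM : (M i : ℝ) ≤ θ * #(blk i)) {u v : Grid d N}
    (huv : Grid.Adj u v) (f : S → (S → Bool) → ℝ) :
    #(sector blk M (φ i u)) * (𝔼 η ∈ sector blk M (φ i u), f (φ i u) η -
        𝔼 η ∈ sector blk M (φ i v), f (φ i v) η) ^ 2 ≤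
      tagMoveConst d θ * (fixedTagEnergy adj blk M (f (φ i u)) (φ i u) i +
        tagJumpEnergy blk M f (φ i u) (φ i v) +
          fixedTagEnergy adj blk M (f (φ i v)) (φ i v) i) := by
  have hu := h.apply_mem i u
  have hv := h.apply_mem i v
  have move_le := h.sq_sum_sector_tag_move_le hd hN hθ0 hθ1 hM huv f
  rw [sum_sub_distrib, sum_sector_comp h.disjoint (swap_mem_permsOn hu hv)
    (Equiv.swap_apply_right _ _), ← card_mul_expect, ← card_mul_expect,
    h.card_sector_eq M hv hu, ← tagMoveConst] at move_le
  rcases (#(sector blk M (φ i u))).eq_zero_or_pos with empty | nonempty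
  · rw [empty, Nat.cast_zero, zero_mul]
    exact mul_nonneg (tagMoveConst_nonneg d hθ0.le) (add_nonneg (add_nonneg
      (fixedTagEnergy_nonneg _ _ _ _) (tagJumpEnergy_nonneg _ _ _ _ _))
      (fixedTagEnergy_nonneg _ _ _ _))
  · refine le_of_mul_le_mul_left (move_le.trans_eq' ?_) (Nat.cast_pos.2 nonempty)
    ring

theorem sum_sub_expect_sector_sq_le [Fintype ι] (h : IsGridPartition adj blk φ) (hd : 2 ≤ d)
    (hN : 1 ≤ N) (M : ι → ℕ) (F : (S → Bool) → ℝ) (x : S) :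
    ∑ η ∈ sector blk M x, (F η - 𝔼 ζ ∈ sector blk M x, F ζ) ^ 2 ≤
      5216 * d ^ 2 * (N + 1) ^ 2 * ∑ j, fixedTagEnergy adj blk M F x j := by
  obtain ⟨c, hc⟩ := h.exists_sum_sector_sub_sq_le hd hN M F x
  exact (sum_sub_expect_sq_le _ F c).trans hc

theorem fixedTagEnergy_add_sum_tagJumpEnergy_le [Finite ι] (h : IsGridPartition adj blk φ)
    (M : ι → ℕ) (i : ι) (f : S → (S → Bool) → ℝ) (u : Grid d N) :
    fixedTagEnergy adj blk M (f (φ i u)) (φ i u) i +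
        ∑ v with Grid.Adj u v, tagJumpEnergy blk M f (φ i u) (φ i v) ≤
      ∑ η ∈ sector blk M (φ i u), exchangeForm adj f (φ i u) η := by
  cases nonempty_fintype ι
  refine le_trans (add_le_add ?_ ?_)
    (h.sum_fixedTagEnergy_add_sum_tagJumpEnergy_le M f (φ i u) (blk i))
  · exact single_le_sum (f := fun j => fixedTagEnergy adj blk M (f (φ i u)) (φ i u) j)
      (fun j _ => fixedTagEnergy_nonneg _ _ _ j) (mem_univ i)
  · refine (sum_le_sum_of_subset_of_nonneg (fun v hv => ?_) fun _ _ _ =>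
      tagJumpEnergy_nonneg _ _ _ _ _).trans_eq
        (h.sum_filter_blk i (adj (φ i u)) (tagJumpEnergy blk M f (φ i u))).symm
    exact mem_filter.2 ⟨mem_univ v, h.adj i u v (mem_filter.1 hv).2⟩

theorem sum_adj_card_mul_sq_expect_sector_sub_le [Finite ι] (h : IsGridPartition adj blk φ)
    (hd : 2 ≤ d) (hN : 1 ≤ N) (hθ0 : 0 < θ) (hθ1 : θ < 1) (hM : (M i : ℝ) ≤ θ * #(blk i))
    (f : S → (S → Bool) → ℝ) :
    ∑ u, ∑ v with Grid.Adj u v, #(sector blk M (φ i u)) *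
        (𝔼 η ∈ sector blk M (φ i u), f (φ i u) η -
          𝔼 η ∈ sector blk M (φ i v), f (φ i v) η) ^ 2 ≤
      2 * 3 ^ d * tagMoveConst d θ *
        ∑ x ∈ blk i, ∑ η ∈ sector blk M x, exchangeForm adj f x η := by
  set E : Grid d N → ℝ := fun u => fixedTagEnergy adj blk M (f (φ i u)) (φ i u) i
  set J : Grid d N → Grid d N → ℝ := fun u v => tagJumpEnergy blk M f (φ i u) (φ i v)
  have E_nonneg (u : Grid d N) : 0 ≤ E u := fixedTagEnergy_nonneg _ _ _ _
  have J_nonneg (u v : Grid d N) : 0 ≤ J u v := tagJumpEnergy_nonneg _ _ _ _ _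
  have J_sum_nonneg : 0 ≤ ∑ u, ∑ v with Grid.Adj u v, J u v :=
    sum_nonneg fun u _ => sum_nonneg fun v _ => J_nonneg u v
  have one_le : (1 : ℝ) ≤ 3 ^ d := one_le_pow₀ (by norm_num)
  calc ∑ u, ∑ v with Grid.Adj u v, #(sector blk M (φ i u)) *
        (𝔼 η ∈ sector blk M (φ i u), f (φ i u) η -
          𝔼 η ∈ sector blk M (φ i v), f (φ i v) η) ^ 2
      ≤ ∑ u, ∑ v with Grid.Adj u v, tagMoveConst d θ * (E u + J u v + E v) :=
        sum_le_sum fun u _ => sum_le_sum fun v hv =>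
          h.card_mul_sq_expect_sector_sub_le hd hN hθ0 hθ1 hM (mem_filter.1 hv).2 f
    _ = tagMoveConst d θ * (∑ u, ∑ v with Grid.Adj u v, E u +
          ∑ u, ∑ v with Grid.Adj u v, J u v + ∑ u, ∑ v with Grid.Adj u v, E v) := by
        simp only [← mul_sum, sum_add_distrib]
    _ ≤ tagMoveConst d θ * (2 * 3 ^ d * ∑ u, (E u + ∑ v with Grid.Adj u v, J u v)) := by
        refine mul_le_mul_of_nonneg_left ?_ (tagMoveConst_nonneg d hθ0.le)
        rw [sum_add_distrib]
        nlinarith [Grid.sum_sum_adj_left_le E_nonneg, Grid.sum_sum_adj_right_le E_nonneg]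
    _ ≤ tagMoveConst d θ * (2 * 3 ^ d * ∑ x ∈ blk i, ∑ η ∈ sector blk M x,
          exchangeForm adj f x η) := by
        have := tagMoveConst_nonneg d hθ0.le
        rw [h.sum_blk i]
        gcongr with u
        exact h.fixedTagEnergy_add_sum_tagJumpEnergy_le M i f u
    _ = _ := by ring

theorem sum_card_mul_sq_expect_sector_sub_le [Finite ι] (h : IsGridPartition adj blk φ)
    (hd : 2 ≤ d) (hN : 1 ≤ N) (hθ0 : 0 < θ) (hθ1 : θ < 1) (hM : (M i : ℝ) ≤ θ * #(blk i))
    (f : S → (S → Bool) → ℝ) :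
    ∑ x ∈ blk i, #(sector blk M x) *
        (𝔼 η ∈ sector blk M x, f x η - sectorAvg blk i M f) ^ 2 ≤
      8 * d ^ 2 * (N + 1) ^ 2 * (2 * 3 ^ d * tagMoveConst d θ *
        ∑ x ∈ blk i, ∑ η ∈ sector blk M x, exchangeForm adj f x η) := by
  have card_sector (x : S) (hx : x ∈ blk i) :
      #(sector blk M x) = #(sector blk M (φ i 0)) := h.card_sector_eq M hx (h.apply_mem i 0)
  have edge_sum := h.sum_adj_card_mul_sq_expect_sector_sub_le hd hN hθ0 hθ1 hM f
  have poincare := h.sum_sub_expect_blk_sq_le i fun x => 𝔼 η ∈ sector blk M x, f x η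
  simp only [card_sector _ (h.apply_mem i _), ← mul_sum] at edge_sum
  rw [sum_congr rfl fun x hx => by rw [card_sector x hx], ← mul_sum]
  unfold sectorAvg
  refine (mul_le_mul_of_nonneg_left poincare (Nat.cast_nonneg _)).trans ?_
  rw [mul_left_comm]
  exact mul_le_mul_of_nonneg_left edge_sum (by positivity)

theorem sum_sub_sectorAvg_sq_le [Finite ι] (h : IsGridPartition adj blk φ) (hd : 2 ≤ d)
    (hN : 1 ≤ N) (hθ0 : 0 < θ) (hθ1 : θ < 1) (hM : (M i : ℝ) ≤ θ * #(blk i))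
    (f : S → (S → Bool) → ℝ) :
    ∑ x ∈ blk i, ∑ η ∈ sector blk M x, (f x η - sectorAvg blk i M f) ^ 2 ≤
      blockGapConst d θ * (N + 1) ^ 2 *
        ∑ x ∈ blk i, ∑ η ∈ sector blk M x, exchangeForm adj f x η := by
  cases nonempty_fintype ι
  have fixedTag_le (x : S) : ∑ j, fixedTagEnergy adj blk M (f x) x j ≤
      ∑ η ∈ sector blk M x, exchangeForm adj f x η := by
    simpa using h.sum_fixedTagEnergy_add_sum_tagJumpEnergy_le M f x ∅
  have within : ∑ x ∈ blk i, ∑ η ∈ sector blk M x, (f x η - 𝔼 ζ ∈ sector blk M x, f x ζ) ^ 2 ≤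
      5216 * d ^ 2 * (N + 1) ^ 2 * ∑ x ∈ blk i, ∑ η ∈ sector blk M x, exchangeForm adj f x η := by
    rw [mul_sum]
    exact sum_le_sum fun x _ => (h.sum_sub_expect_sector_sq_le hd hN M (f x) x).trans
      (mul_le_mul_of_nonneg_left (fixedTag_le x) (by positivity))
  have between := h.sum_card_mul_sq_expect_sector_sub_le hd hN hθ0 hθ1 hM f
  rw [sum_congr rfl fun x _ => sum_sub_sq_eq_add _ _ _, sum_add_distrib]
  refine (add_le_add within between).trans_eq ?_
  rw [blockGapConst]
  ring

end IsGridPartition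
end BlockVariance

section RpowVariance

open scoped BigOperators

variable {α : Type*} {p : ℝ}

theorem rpow_abs_sub_le {a b : ℝ} (ha : 0 ≤ a) (hb : 0 ≤ b) (hp : 1 ≤ p) :
    |a - b| ^ p ≤ |a ^ p - b ^ p| := by
  wlog hab : b ≤ a generalizing a b
  · rw [abs_sub_comm, abs_sub_comm (a ^ p)]
    exact this hb ha (le_of_not_ge hab)
  · have superadditive := Real.add_rpow_le_rpow_add (sub_nonneg.2 hab) hb hp
    rw [sub_add_cancel] at superadditive
    rw [abs_of_nonneg (sub_nonneg.2 hab)]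
    exact (le_sub_iff_add_le.2 superadditive).trans (le_abs_self _)

theorem rpow_abs_sub_two_mul_le {a b : ℝ} (ha : 0 ≤ a) (hb : 0 ≤ b) (hp : 1 ≤ p) :
    |a - b| ^ (2 * p) ≤ (a ^ p - b ^ p) ^ 2 := by
  rw [mul_comm, Real.rpow_mul (abs_nonneg _), Real.rpow_two, ← sq_abs (a ^ p - b ^ p)]
  gcongr
  exact rpow_abs_sub_le ha hb hp

theorem expect_rpow_le {A : Finset α} (hA : A.Nonempty) {g : α → ℝ} (hg : ∀ a ∈ A, 0 ≤ g a)
    (hp : 1 ≤ p) : (𝔼 a ∈ A, g a) ^ p ≤ 𝔼 a ∈ A, g a ^ p := by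
  have jensen := Real.rpow_arith_mean_le_arith_mean_rpow A (fun _ => (#A : ℝ)⁻¹) g
    (fun _ _ => by positivity) (by simp [hA.card_ne_zero]) hg hp
  simpa only [expect_eq_sum_div_card, div_eq_inv_mul, mul_sum] using jensen

theorem sum_rpow_abs_sub_expect_le (A : Finset α) {g : α → ℝ} (hg : ∀ a ∈ A, 0 ≤ g a)
    (hp : 1 ≤ p) (c : ℝ) :
    ∑ a ∈ A, |g a - 𝔼 b ∈ A, g b| ^ (2 * p) ≤ 2 * ∑ a ∈ A, (g a ^ p - c) ^ 2 := by
  rcases A.eq_empty_or_nonempty with rfl | hA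
  · simp
  have abs_le (a : α) : |g a - 𝔼 b ∈ A, g b| ≤ 𝔼 b ∈ A, |g a - g b| := by
    rw [← expect_const hA (g a), ← expect_sub_distrib]
    simpa only [expect_const hA] using abs_expect_le A fun b => g a - g b
  calc ∑ a ∈ A, |g a - 𝔼 b ∈ A, g b| ^ (2 * p)
      ≤ ∑ a ∈ A, 𝔼 b ∈ A, |g a - g b| ^ (2 * p) := sum_le_sum fun a _ =>
        (Real.rpow_le_rpow (abs_nonneg _) (abs_le a) (by linarith)).trans
          (expect_rpow_le hA (fun _ _ => abs_nonneg _) (by linarith))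
    _ ≤ ∑ a ∈ A, 𝔼 b ∈ A, (g a ^ p - g b ^ p) ^ 2 := sum_le_sum fun a ha =>
        expect_le_expect fun b hb => rpow_abs_sub_two_mul_le (hg a ha) (hg b hb) hp
    _ = 2 * ∑ a ∈ A, (g a ^ p - 𝔼 b ∈ A, g b ^ p) ^ 2 := by
        have card_ne_zero : (#A : ℝ) ≠ 0 := Nat.cast_ne_zero.2 hA.card_ne_zero
        simp only [expect_eq_sum_div_card _ fun b => (_ - g b ^ p) ^ 2, ← sum_div]
        rw [sum_sum_sub_sq_eq A fun a => g a ^ p]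
        field_simp
    _ ≤ 2 * ∑ a ∈ A, (g a ^ p - c) ^ 2 := by
        gcongr 2 * ?_
        exact sum_sub_expect_sq_le A _ c

end RpowVariance

section CountDecomposition

variable {S ι : Type*} [Fintype S] [DecidableEq S]

theorem sum_filter_eq_sum_sector [DecidableEq (ι → ℕ)] (blk : ι → Finset S) (x : S)
    (F : (S → Bool) → ℝ) :
    ∑ η with η x = true, F η =
      ∑ M ∈ univ.image fun η j => particles (blk j) η, ∑ η ∈ sector blk M x, F η := by
  rw [← sum_fiberwise_of_maps_to (g := fun η j => particles (blk j) η) fun η _ =>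
    mem_image_of_mem _ (mem_univ η)]
  refine sum_congr rfl fun M _ => sum_congr ?_ fun _ _ => rfl
  ext η
  simp only [mem_sector, mem_filter, mem_univ, true_and, funext_iff]

end CountDecomposition

section BlockRpow

open scoped BigOperators

namespace IsGridPartition

variable {S ι : Type*} {d N : ℕ} {adj : S → S → Prop} {blk : ι → Finset S} {φ : ι → Grid d N → S}
  [Fintype S] [DecidableEq S] {θ p : ℝ} {g : S → (S → Bool) → ℝ} {W : (S → Bool) → ℝ}

theorem sectorAvg_eq_expect_sigma (h : IsGridPartition adj blk φ) (i : ι) (M : ι → ℕ)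
    (f : S → (S → Bool) → ℝ) :
    sectorAvg blk i M f =
      𝔼 a ∈ (blk i).sigma fun x => sector blk M x, f a.1 a.2 :=
  (expect_sigma_of_card_eq (fun _ hx => h.card_sector_eq M hx (h.apply_mem i 0)) f).symm

theorem sum_rpow_abs_sub_sectorAvg_le [Finite ι] (h : IsGridPartition adj blk φ) (hd : 2 ≤ d)
    (hN : 1 ≤ N) (hθ0 : 0 < θ) (hθ1 : θ < 1) {M : ι → ℕ} {i : ι}
    (hM : (M i : ℝ) ≤ θ * #(blk i)) (hg : ∀ x η, 0 ≤ g x η) (hp : 1 ≤ p) :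
    ∑ x ∈ blk i, ∑ η ∈ sector blk M x, |g x η - sectorAvg blk i M g| ^ (2 * p) ≤
      2 * (blockGapConst d θ * (N + 1) ^ 2 *
        ∑ x ∈ blk i, ∑ η ∈ sector blk M x, exchangeForm adj (fun x η => g x η ^ p) x η) := by
  have gap := h.sum_sub_sectorAvg_sq_le hd hN hθ0 hθ1 hM fun x η => g x η ^ p
  rw [sum_sigma'] at gap ⊢
  rw [h.sectorAvg_eq_expect_sigma i M g]
  exact (sum_rpow_abs_sub_expect_le _ (fun _ _ => hg _ _) hp _).trans
    (mul_le_mul_of_nonneg_left gap two_pos.le)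

theorem sum_mul_rpow_abs_sub_sectorAvg_le [Finite ι] (h : IsGridPartition adj blk φ)
    (hd : 2 ≤ d) (hN : 1 ≤ N) (hθ0 : 0 < θ) (hθ1 : θ < 1) (hg : ∀ x η, 0 ≤ g x η) (hp : 1 ≤ p)
    (hW : ∀ η, 0 ≤ W η)
    (hcounts : ∀ η η', (∀ j, particles (blk j) η = particles (blk j) η') → W η = W η')
    (hdensity : ∀ η, W η ≠ 0 → ∀ j, (particles (blk j) η : ℝ) ≤ θ * #(blk j)) (i : ι) :
    ∑ x ∈ blk i, ∑ η with η x = true,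
        W η * |g x η - sectorAvg blk i (fun j => particles (blk j) η) g| ^ (2 * p) ≤
      2 * (blockGapConst d θ * (N + 1) ^ 2 * ∑ x ∈ blk i, ∑ η with η x = true,
        W η * exchangeForm adj (fun x η => g x η ^ p) x η) := by
  simp only [sum_filter_eq_sum_sector blk]
  rw [sum_comm, sum_comm (s := blk i), mul_sum, mul_sum]
  refine sum_le_sum fun M hM => ?_
  obtain ⟨ζ, -, rfl⟩ := mem_image.1 hM
  set M : ι → ℕ := fun j => particles (blk j) ζ
  have weight_eq (x : S) (η : S → Bool) (hη : η ∈ sector blk M x) : W η = W ζ :=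
    hcounts η ζ (mem_sector.1 hη).2
  have lhs_eq : ∑ x ∈ blk i, ∑ η ∈ sector blk M x,
      W η * |g x η - sectorAvg blk i (fun j => particles (blk j) η) g| ^ (2 * p) =
        W ζ * ∑ x ∈ blk i, ∑ η ∈ sector blk M x, |g x η - sectorAvg blk i M g| ^ (2 * p) := by
    simp only [mul_sum]
    refine sum_congr rfl fun x _ => sum_congr rfl fun η hη => ?_
    rw [weight_eq x η hη, funext (mem_sector.1 hη).2]
  have rhs_eq : ∑ x ∈ blk i, ∑ η ∈ sector blk M x,
      W η * exchangeForm adj (fun x η => g x η ^ p) x η =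
        W ζ * ∑ x ∈ blk i, ∑ η ∈ sector blk M x,
          exchangeForm adj (fun x η => g x η ^ p) x η := by
    simp only [mul_sum]
    exact sum_congr rfl fun x _ => sum_congr rfl fun η hη => by rw [weight_eq x η hη]
  rw [lhs_eq, rhs_eq, mul_left_comm _ (W ζ), mul_left_comm _ (W ζ)]
  rcases eq_or_ne (W ζ) 0 with zero | ne_zero
  · rw [zero, zero_mul, zero_mul]
  · exact mul_le_mul_of_nonneg_left
      (h.sum_rpow_abs_sub_sectorAvg_le hd hN hθ0 hθ1 (hdensity ζ ne_zero i) hg hp) (hW ζ)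

end IsGridPartition

end BlockRpow

section TaggedBernoulli

variable {d L : ℕ} {ρ : ℝ}

/-- The Bernoulli product weight of a configuration. -/
def bernoulliWeight (d L : ℕ) (ρ : ℝ) (η : Config d L) : ℝ := ∏ y, if η y then ρ else 1 - ρ

theorem bernoulliWeight_pos (hρ : ρ ∈ Set.Ioo (0 : ℝ) 1) (η : Config d L) :
    0 < bernoulliWeight d L ρ η :=
  prod_pos fun y _ => by split_ifs <;> linarith [hρ.1, hρ.2]

theorem mul_tagWeight (x : Site d L) (η : Config d L) :
    ρ * tagWeight d L ρ x η = if η x = true then bernoulliWeight d L ρ η else 0 := by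
  unfold tagWeight bernoulliWeight
  split_ifs with hx
  · rw [one_mul, ← mul_prod_erase univ _ (mem_univ x), if_pos hx]
  · rw [zero_mul, mul_zero]

theorem mul_tagExp (x : Site d L) (g : Config d L → ℝ) :
    ρ * tagExp d L ρ x g = ∑ η with η x = true, bernoulliWeight d L ρ η * g η := by
  simp only [tagExp, mul_sum, ← mul_assoc, mul_tagWeight, ite_mul, zero_mul, sum_filter]

theorem tagExp_nonneg (hρ : ρ ∈ Set.Ioo (0 : ℝ) 1) (x : Site d L) {g : Config d L → ℝ}
    (hg : ∀ η, 0 ≤ g η) : 0 ≤ tagExp d L ρ x g := by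
  refine nonneg_of_mul_nonneg_right ?_ hρ.1
  rw [mul_tagExp]
  exact sum_nonneg fun η _ => mul_nonneg (bernoulliWeight_pos hρ η).le (hg η)

theorem tagExp_exchangeForm (x : Site d L) (f : Site d L → Config d L → ℝ) :
    tagExp d L ρ x (exchangeForm SiteAdj f x) =
      ∑ y, ∑ z, if SiteAdj y z then
        tagExp d L ρ x (fun η => (if η y ≠ η z then (1 : ℝ) else 0) *
          (f (Equiv.swap y z x) (η ∘ Equiv.swap y z) - f x η) ^ 2)
      else 0 := by
  simp only [tagExp, exchangeForm, mul_sum, exchangeSq]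
  rw [sum_comm]
  refine sum_congr rfl fun y _ => ?_
  rw [sum_comm, sum_filter]
  exact sum_congr rfl fun z _ => ite_congr rfl (fun _ => rfl) fun _ => rfl

theorem bernoulliWeight_eq_of_particles_eq {ι : Type*} {blk : ι → Finset (Site d L)}
    (hdisj : Pairwise (Function.onFun Disjoint blk)) (hcover : ∀ x, ∃ j, x ∈ blk j)
    {η η' : Config d L} (hcount : ∀ j, particles (blk j) η = particles (blk j) η') :
    bernoulliWeight d L ρ η = bernoulliWeight d L ρ η' :=
  eq_of_particles_eq hdisj
    (fun _ s _ t _ η => Equiv.prod_comp (Equiv.swap s t) fun y => if η y then ρ else 1 - ρ)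
    (fun v _ => hcover v) hcount

end TaggedBernoulli

section BoxChart

variable {d L ℓ m : ℕ} {v : Fin m → Fin d → ℤ}

theorem mem_Box {x : Fin d → ℤ} : x ∈ Box d ℓ ↔ ∀ k, -(ℓ : ℤ) ≤ x k ∧ x k ≤ ℓ := by
  simp only [Box, mem_Icc, Pi.le_def, forall_and]

theorem mem_block {w : Fin d → ℤ} {x : Site d L} :
    x ∈ block d L ℓ w ↔ (x : Fin d → ℤ) - w ∈ Box d ℓ := by
  rw [block, mem_filter_univ]

/-- The chart of `B_ℓ` by the grid with `2ℓ + 1` points per side: a grid point gives the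
coordinates relative to the lowest corner. -/
def boxPoint (ℓ : ℕ) (u : Grid d (2 * ℓ)) : Fin d → ℤ := fun k => (u k : ℕ) - (ℓ : ℤ)

theorem boxPoint_injective : Function.Injective (boxPoint (d := d) ℓ) := by
  intro s t hst
  ext k
  have coord_eq := congrFun hst k
  unfold boxPoint at coord_eq
  omega

theorem mem_Box_iff_exists_boxPoint_eq {x : Fin d → ℤ} :
    x ∈ Box d ℓ ↔ ∃ u, boxPoint ℓ u = x := by
  rw [mem_Box]
  constructor
  · intro hx
    refine ⟨fun k => ⟨(x k + ℓ).toNat, ?_⟩, funext fun k => ?_⟩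
    · have := hx k
      omega
    · have := hx k
      simp only [boxPoint]
      omega
  · rintro ⟨u, rfl⟩ k
    have := (u k).isLt
    unfold boxPoint
    omega

theorem boxPoint_mem (u : Grid d (2 * ℓ)) : boxPoint ℓ u ∈ Box d ℓ :=
  mem_Box_iff_exists_boxPoint_eq.2 ⟨u, rfl⟩

theorem card_Box : #(Box d ℓ) = Fintype.card (Grid d (2 * ℓ)) := by
  rw [← card_univ, ← card_image_of_injective univ boxPoint_injective]
  congr 1
  ext x
  simp only [mem_Box_iff_exists_boxPoint_eq, mem_image, mem_univ, true_and]

theorem isGridPartition_block (hv : ∀ i, ∀ z ∈ Box d ℓ, v i + z ∈ Box d L)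
    (hexists : ∀ x : Site d L, ∃! i : Fin m, (x : Fin d → ℤ) - v i ∈ Box d ℓ) :
    IsGridPartition (SiteAdj (d := d) (L := L)) (fun i => block d L ℓ (v i))
      (fun i u => ⟨v i + boxPoint ℓ u, hv i _ (boxPoint_mem u)⟩) where
  mem_blk_iff i x := by
    rw [mem_block, mem_Box_iff_exists_boxPoint_eq]
    exact exists_congr fun u => by rw [Subtype.ext_iff, eq_sub_iff_add_eq']
  injective i s t hst := boxPoint_injective (add_left_cancel (Subtype.ext_iff.1 hst))
  adj i s t hst := by
    refine (sum_congr rfl fun k _ => ?_).trans hst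
    simp only [Pi.add_apply, boxPoint]
    ring
  disjoint i j hij := disjoint_left.2 fun x hi hj =>
    hij ((hexists x).unique (mem_block.1 hi) (mem_block.1 hj))
  cover x := (hexists x).exists.imp fun _ => mem_block.2

end BoxChart

section Averages

open scoped BigOperators

variable {d L ℓ m : ℕ} {ρ : ℝ} {v : Fin m → Fin d → ℤ}
  {φ : Fin m → Grid d (2 * ℓ) → Site d L}

theorem mul_tagExp_ite_blockCount (y : Site d L) (M : Fin m → ℕ) (g : Config d L → ℝ) :
    ρ * tagExp d L ρ y (fun η => if ∀ i, blockCount d L ℓ (v i) η = M i then g η else 0) =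
      ∑ η ∈ sector (fun i => block d L ℓ (v i)) M y, bernoulliWeight d L ρ η * g η := by
  simp only [mul_tagExp, sector, mul_ite, mul_zero, ← sum_filter, filter_filter]
  rfl

theorem condExpCounts_eq_expect (hρ : ρ ∈ Set.Ioo (0 : ℝ) 1)
    (h : IsGridPartition SiteAdj (fun i => block d L ℓ (v i)) φ) (y : Site d L) (M : Fin m → ℕ)
    (g : Config d L → ℝ) :
    condExpCounts d L ℓ m ρ v y M g = 𝔼 η ∈ sector (fun i => block d L ℓ (v i)) M y, g η := by
  rw [condExpCounts, ← mul_div_mul_left _ _ hρ.1.ne', mul_tagExp_ite_blockCount,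
    mul_tagExp_ite_blockCount]
  rcases (sector (fun i => block d L ℓ (v i)) M y).eq_empty_or_nonempty with empty | ⟨ζ, hζ⟩
  · simp [empty]
  · have weight_eq (η : Config d L) (hη : η ∈ sector (fun i => block d L ℓ (v i)) M y) :
        bernoulliWeight d L ρ η = bernoulliWeight d L ρ ζ :=
      bernoulliWeight_eq_of_particles_eq h.disjoint h.cover fun j =>
        ((mem_sector.1 hη).2 j).trans ((mem_sector.1 hζ).2 j).symm
    have pull_weight (f : Config d L → ℝ) :
        ∑ η ∈ sector (fun i => block d L ℓ (v i)) M y, bernoulliWeight d L ρ η * f η =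
          bernoulliWeight d L ρ ζ * ∑ η ∈ sector (fun i => block d L ℓ (v i)) M y, f η := by
      rw [mul_sum]
      exact sum_congr rfl fun η hη => by rw [weight_eq η hη]
    rw [pull_weight, pull_weight, mul_div_mul_left _ _ (bernoulliWeight_pos hρ ζ).ne', sum_const,
      nsmul_one, expect_eq_sum_div_card]

theorem piAvg_eq_sectorAvg (hρ : ρ ∈ Set.Ioo (0 : ℝ) 1)
    (h : IsGridPartition SiteAdj (fun i => block d L ℓ (v i)) φ) (i : Fin m) (M : Fin m → ℕ)
    (f : Site d L → Config d L → ℝ) :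
    piAvg d L ℓ m ρ v i M f = sectorAvg (fun i => block d L ℓ (v i)) i M f := by
  rw [piAvg, sectorAvg, expect_eq_sum_div_card, h.card_blk i, card_Box, inv_mul_eq_div]
  simp only [condExpCounts_eq_expect hρ h]

/-- The Bernoulli weight restricted to the event in the indicator `1^ρ(𝐌)`. -/
def goodWeight (d L ℓ m : ℕ) (ρ : ℝ) (v : Fin m → Fin d → ℤ) (η : Config d L) : ℝ :=
  if goodCounts d L ℓ m ρ v η then bernoulliWeight d L ρ η else 0

theorem goodWeight_nonneg (hρ : ρ ∈ Set.Ioo (0 : ℝ) 1) (η : Config d L) :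
    0 ≤ goodWeight d L ℓ m ρ v η :=
  ite_nonneg (bernoulliWeight_pos hρ η).le le_rfl

theorem goodWeight_le_bernoulliWeight (hρ : ρ ∈ Set.Ioo (0 : ℝ) 1) (η : Config d L) :
    goodWeight d L ℓ m ρ v η ≤ bernoulliWeight d L ρ η :=
  (ite_le_sup _ _ _).trans (sup_le le_rfl (bernoulliWeight_pos hρ η).le)

theorem goodWeight_eq_of_particles_eq
    (h : IsGridPartition SiteAdj (fun i => block d L ℓ (v i)) φ) (η η' : Config d L)
    (hcount : ∀ j, particles (block d L ℓ (v j)) η = particles (block d L ℓ (v j)) η') :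
    goodWeight d L ℓ m ρ v η = goodWeight d L ℓ m ρ v η' := by
  have blockCount_eq (j : Fin m) : blockCount d L ℓ (v j) η = blockCount d L ℓ (v j) η' :=
    hcount j
  have goodCounts_iff : goodCounts d L ℓ m ρ v η ↔ goodCounts d L ℓ m ρ v η' := by
    simp only [goodCounts, blockCount_eq]
  exact if_congr goodCounts_iff
    (bernoulliWeight_eq_of_particles_eq h.disjoint h.cover hcount) rfl

theorem particles_le_of_goodWeight_ne_zero
    (h : IsGridPartition SiteAdj (fun i => block d L ℓ (v i)) φ) (η : Config d L)
    (hη : goodWeight d L ℓ m ρ v η ≠ 0) (j : Fin m) :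
    (particles (block d L ℓ (v j)) η : ℝ) ≤ (ρ + 1) / 2 * #(block d L ℓ (v j)) := by
  have good : goodCounts d L ℓ m ρ v η := of_not_not fun bad => hη (if_neg bad)
  rw [h.card_blk, ← card_Box]
  exact (good j).2

theorem sum_tagExp_goodCounts_le (hd : 2 ≤ d) (hρ : ρ ∈ Set.Ioo (0 : ℝ) 1) (hℓ : 1 ≤ ℓ)
    (h : IsGridPartition SiteAdj (fun i => block d L ℓ (v i)) φ)
    {g : Site d L → Config d L → ℝ} (hg : ∀ x η, 0 ≤ g x η) {p : ℝ} (hp : 1 ≤ p) :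
    ∑ i, ∑ x ∈ block d L ℓ (v i), tagExp d L ρ x (fun η =>
        |g x η - piAvg d L ℓ m ρ v i (fun j => blockCount d L ℓ (v j) η) g| ^ (2 * p) *
          (if goodCounts d L ℓ m ρ v η then 1 else 0)) ≤
      2 * (blockGapConst d ((ρ + 1) / 2) * ((2 * ℓ : ℕ) + 1) ^ 2 *
        ∑ x, tagExp d L ρ x (exchangeForm SiteAdj (fun x η => g x η ^ p) x)) := by
  obtain ⟨hρ0, hρ1⟩ := id hρ
  have const_nonneg : 0 ≤ blockGapConst d ((ρ + 1) / 2) := blockGapConst_nonneg d (by linarith)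
  refine le_of_mul_le_mul_left ?_ hρ0
  calc ρ * _
      = ∑ i, ∑ x ∈ block d L ℓ (v i), ∑ η with η x = true, goodWeight d L ℓ m ρ v η *
          |g x η - sectorAvg (fun i => block d L ℓ (v i)) i
            (fun j => particles (block d L ℓ (v j)) η) g| ^ (2 * p) := by
        simp only [mul_sum, mul_tagExp, piAvg_eq_sectorAvg hρ h, goodWeight, ite_mul, zero_mul,
          mul_ite, mul_one, mul_zero]
        rfl
    _ ≤ ∑ i, 2 * (blockGapConst d ((ρ + 1) / 2) * ((2 * ℓ : ℕ) + 1) ^ 2 *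
          ∑ x ∈ block d L ℓ (v i), ∑ η with η x = true, goodWeight d L ℓ m ρ v η *
            exchangeForm SiteAdj (fun x η => g x η ^ p) x η) := sum_le_sum fun i _ =>
        h.sum_mul_rpow_abs_sub_sectorAvg_le hd (by omega) (by linarith) (by linarith) hg hp
          (goodWeight_nonneg hρ) (goodWeight_eq_of_particles_eq h)
          (particles_le_of_goodWeight_ne_zero h) i
    _ ≤ ∑ i, 2 * (blockGapConst d ((ρ + 1) / 2) * ((2 * ℓ : ℕ) + 1) ^ 2 *
          ∑ x ∈ block d L ℓ (v i), ∑ η with η x = true, bernoulliWeight d L ρ η *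
            exchangeForm SiteAdj (fun x η => g x η ^ p) x η) := by
        gcongr with i _ x _ η _
        · exact exchangeForm_nonneg _ _ _
        · exact goodWeight_le_bernoulliWeight hρ η
    _ = _ := by
        simp only [← mul_tagExp, ← mul_sum, h.sum_sum_blk]
        ring

end Averages

/-- **Conditional spectral gap with local particle-number averaging.**
Let `d ≥ 2`, `ρ ∈ (0,1)` and `p ≥ 1`.  There exists `C(d,ρ,p) < ∞` such that for all
`ℓ, L ≥ 1` with `(2ℓ+1) ∣ (2L+1)` and `B_L` partitioned into
`m = (2L+1)^d/(2ℓ+1)^d` disjoint translates `B_{ℓ,1},…,B_{ℓ,m}` of `B_ℓ` (the translate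
`B_{ℓ,i} = v_i + B_ℓ`), and every (bounded) nonnegative function `h` on
`{(x,η) ∈ B_L × {0,1}^{B_L} : η(x) = 1}`,
`Σ_{x ∈ B_L} ⟨|h − π^ℓ_L h(𝐌,x)|^{2p} 1^ρ(𝐌) | x⟩
   ≤ C ℓ² Σ_{x ∈ B_L} Σ_{e ∈ 𝔹_L} ⟨a_e ((h^e)^p − h^p)² | x⟩`.
The left side is written as a sum over the blocks `i` and the sites `x ∈ B_{ℓ,i}`, the
sum over unordered edges `e = {y,z}` of `𝔹_L` is written as half the sum over ordered
pairs of adjacent sites, `a_e(η) = 1_{η(y) ≠ η(z)}`, and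
`h^e(x,η) = h(x^e, η^e)` with `x^e` the transposition of the endpoints of `e`. -/
theorem conditional_spectral_gap_local_averaging
    (d : ℕ) (hd : 2 ≤ d) (ρ : ℝ) (hρ : ρ ∈ Set.Ioo (0 : ℝ) 1) (p : ℝ) (hp : 1 ≤ p) :
    ∃ C : ℝ, ∀ ℓ L : ℕ, 1 ≤ ℓ → 1 ≤ L → (2 * ℓ + 1) ∣ (2 * L + 1) →
      ∀ m : ℕ, ∀ v : Fin m → Fin d → ℤ,
        m * (2 * ℓ + 1) ^ d = (2 * L + 1) ^ d →
        (∀ i, ∀ z ∈ Box d ℓ, v i + z ∈ Box d L) →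
        (∀ x : Site d L, ∃! i : Fin m, (x : Fin d → ℤ) - v i ∈ Box d ℓ) →
        ∀ h : Site d L → Config d L → ℝ, (∀ x η, 0 ≤ h x η) →
          (∑ i : Fin m, ∑ x ∈ block d L ℓ (v i),
            tagExp d L ρ x (fun η =>
              |h x η - piAvg d L ℓ m ρ v i (fun i' => blockCount d L ℓ (v i') η) h|
                  ^ (2 * p) *
                (if goodCounts d L ℓ m ρ v η then 1 else 0))) ≤
          C * (ℓ : ℝ) ^ 2 *
            ((1 : ℝ) / 2 * ∑ x : Site d L, ∑ y : Site d L, ∑ z : Site d L,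
              if SiteAdj y z then
                tagExp d L ρ x (fun η =>
                  (if η y ≠ η z then (1 : ℝ) else 0) *
                    ((h (Equiv.swap y z x) (η ∘ Equiv.swap y z)) ^ p - (h x η) ^ p) ^ 2)
              else 0) := by
  refine ⟨36 * blockGapConst d ((ρ + 1) / 2), fun ℓ L hℓ _ _ m v _ hv hexists h hh => ?_⟩
  have const_nonneg : 0 ≤ blockGapConst d ((ρ + 1) / 2) :=
    blockGapConst_nonneg d (by linarith [hρ.1])
  have energy_nonneg : 0 ≤ ∑ x, tagExp d L ρ x (exchangeForm SiteAdj (fun x η => h x η ^ p) x) :=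
    sum_nonneg fun x _ => tagExp_nonneg hρ x (exchangeForm_nonneg _ _)
  have side_le : ((2 * ℓ : ℕ) + 1 : ℝ) ≤ 3 * ℓ := by exact_mod_cast (by omega)
  calc _ ≤ 2 * (blockGapConst d ((ρ + 1) / 2) * ((2 * ℓ : ℕ) + 1) ^ 2 *
          ∑ x, tagExp d L ρ x (exchangeForm SiteAdj (fun x η => h x η ^ p) x)) :=
        sum_tagExp_goodCounts_le hd hρ hℓ (isGridPartition_block hv hexists) hh hp
    _ ≤ 2 * (blockGapConst d ((ρ + 1) / 2) * (3 * ℓ) ^ 2 *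
          ∑ x, tagExp d L ρ x (exchangeForm SiteAdj (fun x η => h x η ^ p) x)) := by gcongr
    _ = _ := by
        simp only [tagExp_exchangeForm]
        ring

end
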